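/- Let (R, m) be a commutative Noetherian local ring, M a finitely generated R-module of Krull dimension n, and I an ideal of R such that dim(M/IM) = d. Then n − d ≤ cd(I,M). -/

import Mathlib

universe u

open CategoryTheory

/-- The cohomological dimension of `M` with respect to `I`:
`cd(I,M) = sup { i ∈ ℕ | H^i_I(M) ≠ 0 }`, as an element of `ℕ∞`. -/
noncomputable def cohomologicalDimension {R : Type u} [CommRing R] (I : Ideal R)
    (M : ModuleCat.{u} R) : ℕ∞ :=
  sSup {c : ℕ∞ | ∃ i : ℕ, c = i ∧ Nontrivial ((localCohomology I i).obj M)}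

section LeftDerived

open Limits

variable {C D : Type*} [Category* C] [Category* D] [Abelian C] [Abelian D]
  {F G H : C ⥤ D} [F.Additive] [G.Additive] [H.Additive]

/-- The short complex of chain complexes obtained by applying two composable natural
transformations of additive functors, with zero composition, to a chain complex. -/
noncomputable abbrev mapShortComplexOfChainComplex (α : F ⟶ G) (β : G ⟶ H) (w : α ≫ β = 0)
    (K : ChainComplex C ℕ) : ShortComplex (ChainComplex D ℕ) where
  X₁ := (F.mapHomologicalComplex _).obj K
  X₂ := (G.mapHomologicalComplex _).obj K
  X₃ := (H.mapHomologicalComplex _).obj K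
  f := (NatTrans.mapHomologicalComplex α _).app K
  g := (NatTrans.mapHomologicalComplex β _).app K
  zero := by
    ext i
    exact congr_app w (K.X i)

/-- A sequence of additive functors that is short exact on projective objects is short exact
on complexes of projective objects. -/
lemma mapShortComplexOfChainComplex_shortExact (α : F ⟶ G) (β : G ⟶ H) (w : α ≫ β = 0)
    (hS : ∀ (P : C) [Projective P],
      (ShortComplex.mk (α.app P) (β.app P) (congr_app w P)).ShortExact)
    (K : ChainComplex C ℕ) [∀ i, Projective (K.X i)] :
    (mapShortComplexOfChainComplex α β w K).ShortExact :=
  HomologicalComplex.shortExact_of_degreewise_shortExact _ fun i => hS (K.X i)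

variable [EnoughProjectives C]

variable (F) in
/-- Left derived functors computed with the chosen projective resolution. -/
noncomputable def leftDerivedObjIso (n : ℕ) (X : C) :
    (F.leftDerived n).obj X ≅
      ((F.mapHomologicalComplex _).obj (projectiveResolution X).complex).homology n :=
  (projectiveResolution X).isoLeftDerivedObj F n

variable (F) in
lemma leftDerived_map_comp_leftDerivedObjIso_hom (n : ℕ) {X Y : C} (f : X ⟶ Y) :
    (F.leftDerived n).map f ≫ (leftDerivedObjIso F n Y).hom =
      (leftDerivedObjIso F n X).hom ≫ HomologicalComplex.homologyMap
        ((F.mapHomologicalComplex _).map (ProjectiveResolution.lift f _ _)) n :=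
  ProjectiveResolution.isoLeftDerivedObj_hom_naturality f _ _ _
    (ProjectiveResolution.lift_commutes_zero f _ _) F n

lemma leftDerived_app_comp_leftDerivedObjIso_hom (α : F ⟶ G) (n : ℕ) (X : C) :
    (NatTrans.leftDerived α n).app X ≫ (leftDerivedObjIso G n X).hom =
      (leftDerivedObjIso F n X).hom ≫ HomologicalComplex.homologyMap
        ((NatTrans.mapHomologicalComplex α _).app (projectiveResolution X).complex) n := by
  have h : (NatTrans.leftDerived α n).app X = (leftDerivedObjIso F n X).hom ≫
      HomologicalComplex.homologyMap ((NatTrans.mapHomologicalComplex α _).app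
        (projectiveResolution X).complex) n ≫ (leftDerivedObjIso G n X).inv :=
    (projectiveResolution X).leftDerived_app_eq α n
  rw [h]
  simp only [Category.assoc, Iso.inv_hom_id, Category.comp_id]

lemma leftDerived_exact (α : F ⟶ G) (β : G ⟶ H) (w : α ≫ β = 0)
    (hS : ∀ (P : C) [Projective P],
      (ShortComplex.mk (α.app P) (β.app P) (congr_app w P)).ShortExact)
    (n : ℕ) (X : C) :
    ∃ w' : (NatTrans.leftDerived α n).app X ≫ (NatTrans.leftDerived β n).app X = 0,
      (ShortComplex.mk _ _ w').Exact := by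
  have h := (mapShortComplexOfChainComplex_shortExact α β w hS
    (projectiveResolution X).complex).homology_exact₂ n
  have hα := leftDerived_app_comp_leftDerivedObjIso_hom α n X
  have hβ := leftDerived_app_comp_leftDerivedObjIso_hom β n X
  refine ⟨?_, (ShortComplex.exact_iff_of_iso (ShortComplex.isoMk (leftDerivedObjIso F n X)
    (leftDerivedObjIso G n X) (leftDerivedObjIso H n X) hα.symm hβ.symm)).2 h⟩
  rw [← cancel_mono (leftDerivedObjIso H n X).hom, Category.assoc, hβ, reassoc_of% hα]
  have h₀ : HomologicalComplex.homologyMap ((NatTrans.mapHomologicalComplex α _).app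
      (projectiveResolution X).complex) n ≫ HomologicalComplex.homologyMap
        ((NatTrans.mapHomologicalComplex β _).app (projectiveResolution X).complex) n = 0 :=
    ShortComplex.zero ((mapShortComplexOfChainComplex α β w
      (projectiveResolution X).complex).map (HomologicalComplex.homologyFunctor D _ n))
  rw [h₀, Limits.comp_zero, Limits.zero_comp]

/-- A sequence of additive functors that is short exact on projective objects gives rise to
connecting morphisms between left derived functors, natural in the object. -/
lemma exists_leftDerived_connecting (α : F ⟶ G) (β : G ⟶ H) (w : α ≫ β = 0)
    (hS : ∀ (P : C) [Projective P],
      (ShortComplex.mk (α.app P) (β.app P) (congr_app w P)).ShortExact)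
    (n : ℕ) :
    ∃ δ : H.leftDerived (n + 1) ⟶ F.leftDerived n, ∀ X : C,
      (∃ w₁ : (NatTrans.leftDerived β (n + 1)).app X ≫ δ.app X = 0,
        (ShortComplex.mk _ _ w₁).Exact) ∧
      ∃ w₂ : δ.app X ≫ (NatTrans.leftDerived α n).app X = 0,
        (ShortComplex.mk _ _ w₂).Exact := by
  have hP : ∀ X : C, (mapShortComplexOfChainComplex α β w
      (projectiveResolution X).complex).ShortExact := fun X =>
    mapShortComplexOfChainComplex_shortExact α β w hS _
  let d (X : C) := (hP X).δ (n + 1) n (by simp)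
  have hd {X Y : C} (f : X ⟶ Y) : d X ≫ HomologicalComplex.homologyMap
        ((F.mapHomologicalComplex _).map (ProjectiveResolution.lift f _ _)) n =
      HomologicalComplex.homologyMap
        ((H.mapHomologicalComplex _).map (ProjectiveResolution.lift f _ _)) (n + 1) ≫ d Y :=
    HomologicalComplex.HomologySequence.δ_naturality
      { τ₁ := (F.mapHomologicalComplex _).map (ProjectiveResolution.lift f _ _)
        τ₂ := (G.mapHomologicalComplex _).map (ProjectiveResolution.lift f _ _)
        τ₃ := (H.mapHomologicalComplex _).map (ProjectiveResolution.lift f _ _)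
        comm₁₂ := (NatTrans.mapHomologicalComplex α _).naturality _
        comm₂₃ := (NatTrans.mapHomologicalComplex β _).naturality _ }
      (hP X) (hP Y) (n + 1) n (by simp)
  let δ : H.leftDerived (n + 1) ⟶ F.leftDerived n :=
    { app := fun X => (leftDerivedObjIso H (n + 1) X).hom ≫ d X ≫
        (leftDerivedObjIso F n X).inv
      naturality := by
        intro X Y f
        rw [← cancel_mono (leftDerivedObjIso F n Y).hom]
        simp only [Category.assoc, Iso.inv_hom_id, Category.comp_id,
          reassoc_of% leftDerived_map_comp_leftDerivedObjIso_hom,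
          leftDerived_map_comp_leftDerivedObjIso_hom, Iso.inv_hom_id_assoc, hd] }
  refine ⟨δ, fun X => ?_⟩
  have hα := leftDerived_app_comp_leftDerivedObjIso_hom α n X
  have hβ := leftDerived_app_comp_leftDerivedObjIso_hom β (n + 1) X
  have hδ : δ.app X ≫ (leftDerivedObjIso F n X).hom =
    (leftDerivedObjIso H (n + 1) X).hom ≫ d X := by simp [δ]
  refine ⟨⟨?_, (ShortComplex.exact_iff_of_iso (ShortComplex.isoMk
      (leftDerivedObjIso G (n + 1) X) (leftDerivedObjIso H (n + 1) X)
      (leftDerivedObjIso F n X) hβ.symm hδ.symm)).2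
      ((hP X).homology_exact₃ (n + 1) n (by simp))⟩,
    ⟨?_, (ShortComplex.exact_iff_of_iso (ShortComplex.isoMk
      (leftDerivedObjIso H (n + 1) X) (leftDerivedObjIso F n X)
      (leftDerivedObjIso G n X) hδ.symm hα.symm)).2
      ((hP X).homology_exact₁ (n + 1) n (by simp))⟩⟩
  · have := (hP X).comp_δ (n + 1) n (by simp)
    rw [← cancel_mono (leftDerivedObjIso F n X).hom, Category.assoc, hδ, reassoc_of% hβ]
    erw [this]
    simp
  · have := (hP X).δ_comp (n + 1) n (by simp)
    rw [← cancel_mono (leftDerivedObjIso G n X).hom, Category.assoc, hα, reassoc_of% hδ]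
    erw [this]
    simp

end LeftDerived

section Central

variable {D : Type*} [Category* D] [Abelian D]

/-- An endomorphism of the identity functor acts on homology through its value there. -/
lemma homologyMap_of_center (σ : 𝟭 D ⟶ 𝟭 D) {ι : Type*} {c : ComplexShape ι}
    (K : HomologicalComplex D c) (f : K ⟶ K) (hf : ∀ i, f.f i = σ.app (K.X i)) (i : ι) :
    HomologicalComplex.homologyMap f i = σ.app (K.homology i) := by
  rw [← cancel_epi (K.homologyπ i), HomologicalComplex.homologyπ_naturality]
  have := σ.naturality (K.homologyπ i)
  dsimp at this
  rw [this]
  congr 1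
  rw [← cancel_mono (K.iCycles i), HomologicalComplex.cyclesMap_i, hf]
  exact σ.naturality (K.iCycles i)

end Central

section ExtModule

open Opposite Limits

variable {R : Type u} [CommRing R]

/-- The functor `Hom(-, Y)`, viewed as a covariant functor to the opposite category. -/
abbrev homRightOp (Y : ModuleCat.{u} R) : ModuleCat.{u} R ⥤ (ModuleCat.{u} R)ᵒᵖ :=
  ((linearYoneda R (ModuleCat.{u} R)).obj Y).rightOp

/-- The transformation `Hom(-, Z) ⟶ Hom(-, Y)` in the opposite category induced by `Y ⟶ Z`. -/
abbrev homRightOpMap {Y Z : ModuleCat.{u} R} (f : Y ⟶ Z) : homRightOp Z ⟶ homRightOp Y :=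
  NatTrans.rightOp ((linearYoneda R (ModuleCat.{u} R)).map f)

lemma homRightOp_shortExact {S : ShortComplex (ModuleCat.{u} R)} (hS : S.ShortExact)
    (w : homRightOpMap S.g ≫ homRightOpMap S.f = 0) (P : ModuleCat.{u} R) [Projective P] :
    (ShortComplex.mk ((homRightOpMap S.g).app P) ((homRightOpMap S.f).app P)
      (congr_app w P)).ShortExact := by
  have := hS.mono_f
  have := hS.epi_g
  let T : ShortComplex (ModuleCat.{u} R) :=
    ShortComplex.mk (((linearYoneda R (ModuleCat.{u} R)).map S.f).app (op P))
      (((linearYoneda R (ModuleCat.{u} R)).map S.g).app (op P)) (by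
        ext (x : P ⟶ S.X₁)
        change (x ≫ S.f) ≫ S.g = 0
        rw [Category.assoc, S.zero, Limits.comp_zero])
  have hT : T.ShortExact :=
    { exact := by
        rw [ShortComplex.moduleCat_exact_iff]
        intro (x : P ⟶ S.X₂) (hx : x ≫ S.g = 0)
        exact ⟨hS.exact.lift x hx, hS.exact.lift_f x hx⟩
      mono_f := by
        rw [ModuleCat.mono_iff_injective]
        intro (x : P ⟶ S.X₁) (y : P ⟶ S.X₁) (h : x ≫ S.f = y ≫ S.f)
        exact (cancel_mono S.f).1 h
      epi_g := by
        rw [ModuleCat.epi_iff_surjective]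
        intro (x : P ⟶ S.X₃)
        exact ⟨Projective.factorThru x S.g, Projective.factorThru_comp x S.g⟩ }
  exact hT.op

lemma homRightOpMap_comp_eq_zero (S : ShortComplex (ModuleCat.{u} R)) :
    homRightOpMap S.g ≫ homRightOpMap S.f = 0 := by
  ext P
  apply Quiver.Hom.unop_inj
  ext (x : P ⟶ S.X₁)
  change (x ≫ S.f) ≫ S.g = 0
  simp

lemma Ext_map_exact {S : ShortComplex (ModuleCat.{u} R)} (hS : S.ShortExact) (n : ℕ)
    (X : (ModuleCat.{u} R)ᵒᵖ) :
    Function.Exact (((Ext R (ModuleCat.{u} R) n).obj X).map S.f)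
      (((Ext R (ModuleCat.{u} R) n).obj X).map S.g) := by
  obtain ⟨w', h⟩ := leftDerived_exact _ _ (homRightOpMap_comp_eq_zero S)
    (homRightOp_shortExact hS (homRightOpMap_comp_eq_zero S)) n X.unop
  exact (ShortComplex.ShortExact.moduleCat_exact_iff_function_exact _).1 h.unop

lemma exists_Ext_connecting {S : ShortComplex (ModuleCat.{u} R)} (hS : S.ShortExact) (n : ℕ) :
    ∃ δ : (Ext R (ModuleCat.{u} R) n).flip.obj S.X₃ ⟶
        (Ext R (ModuleCat.{u} R) (n + 1)).flip.obj S.X₁,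
      ∀ X, Function.Exact (((Ext R (ModuleCat.{u} R) n).obj X).map S.g) (δ.app X) ∧
        Function.Exact (δ.app X) (((Ext R (ModuleCat.{u} R) (n + 1)).obj X).map S.f) := by
  obtain ⟨δ, h⟩ := exists_leftDerived_connecting _ _ (homRightOpMap_comp_eq_zero S)
    (homRightOp_shortExact hS (homRightOpMap_comp_eq_zero S)) n
  refine ⟨NatTrans.leftOp δ, fun X => ?_⟩
  obtain ⟨⟨w₁, h₁⟩, ⟨w₂, h₂⟩⟩ := h X.unop
  exact ⟨(ShortComplex.ShortExact.moduleCat_exact_iff_function_exact _).1 h₂.unop,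
    (ShortComplex.ShortExact.moduleCat_exact_iff_function_exact _).1 h₁.unop⟩

/-- Multiplication by a scalar as an endomorphism of the identity of the opposite category. -/
def opSmul (a : R) : 𝟭 (ModuleCat.{u} R)ᵒᵖ ⟶ 𝟭 (ModuleCat.{u} R)ᵒᵖ where
  app X := (a • 𝟙 X.unop).op
  naturality X Y f := by
    apply Quiver.Hom.unop_inj
    ext x
    simp

lemma Ext_map_smul_id (a : R) (n : ℕ) (X : (ModuleCat.{u} R)ᵒᵖ) (Y : ModuleCat.{u} R) :
    ((Ext R (ModuleCat.{u} R) n).obj X).map (a • 𝟙 Y) = a • 𝟙 _ := by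
  have h := leftDerived_app_comp_leftDerivedObjIso_hom (homRightOpMap (a • 𝟙 Y)) n X.unop
  rw [homologyMap_of_center (opSmul a) _ _ (fun i => ?_)] at h
  · have h' := (opSmul a).naturality (leftDerivedObjIso (homRightOp Y) n X.unop).hom
    simp only [Functor.id_obj, Functor.id_map] at h'
    rw [h', cancel_mono] at h
    exact congrArg Quiver.Hom.unop h
  · apply Quiver.Hom.unop_inj
    ext (x : _ ⟶ Y)
    change x ≫ (a • 𝟙 Y) = a • x
    simp

lemma subsingleton_Ext_succ_of_injective (n : ℕ) (X : (ModuleCat.{u} R)ᵒᵖ)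
    (J : ModuleCat.{u} R) [Injective J] :
    Subsingleton (((Ext R (ModuleCat.{u} R) (n + 1)).obj X).obj J) := by
  let P := projectiveResolution X.unop
  apply ModuleCat.subsingleton_of_isZero
  refine Limits.IsZero.of_iso ?_ (P.isoExt (n + 1) J)
  rw [← HomologicalComplex.exactAt_iff_isZero_homology,
    HomologicalComplex.exactAt_iff' _ n (n + 1) (n + 2) (by simp) (by simp),
    ShortComplex.moduleCat_exact_iff]
  intro (x : P.complex.X (n + 1) ⟶ J) (hx : P.complex.d (n + 2) (n + 1) ≫ x = 0)
  have hP : (P.complex.sc' (n + 2) (n + 1) n).Exact := P.exact_succ n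
  exact ⟨hP.descToInjective x hx, hP.comp_descToInjective x hx⟩

instance preservesFiniteColimits_homRightOp (Y : ModuleCat.{u} R) :
    PreservesFiniteColimits (homRightOp Y) := by
  have h : PreservesLimits ((linearYoneda R (ModuleCat.{u} R)).obj Y ⋙ forget _) :=
    inferInstanceAs (PreservesLimits (yoneda.obj Y))
  have : PreservesLimits ((linearYoneda R (ModuleCat.{u} R)).obj Y) :=
    preservesLimits_of_reflects_of_preserves _ (forget (ModuleCat.{u} R))
  have := PreservesLimits.preservesFiniteLimits ((linearYoneda R (ModuleCat.{u} R)).obj Y)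
  exact preservesFiniteColimits_rightOp _

lemma leftDerived_zero_app_comp_fromLeftDerivedZero_app {C D : Type*} [Category* C] [Category* D]
    [Abelian C] [Abelian D] {F G : C ⥤ D} [F.Additive] [G.Additive] [EnoughProjectives C]
    (α : F ⟶ G) (X : C) :
    (NatTrans.leftDerived α 0).app X ≫ G.fromLeftDerivedZero.app X =
      F.fromLeftDerivedZero.app X ≫ α.app X := by
  let P := projectiveResolution X
  have e (F : C ⥤ D) [F.Additive] : F.fromLeftDerivedZero.app X =
      (leftDerivedObjIso F 0 X).hom ≫ HomologicalComplex.homologyι _ 0 ≫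
        P.fromLeftDerivedZero' F := P.fromLeftDerivedZero_eq F
  rw [e, e, reassoc_of% leftDerived_app_comp_leftDerivedObjIso_hom α,
    HomologicalComplex.homologyι_naturality_assoc, Category.assoc, Category.assoc]
  congr 2
  rw [← cancel_epi (HomologicalComplex.pOpcycles _ _), HomologicalComplex.p_opcyclesMap_assoc]
  have p (F : C ⥤ D) [F.Additive] : HomologicalComplex.pOpcycles _ 0 ≫
      P.fromLeftDerivedZero' F = F.map (P.π.f 0) :=
    P.pOpcycles_comp_fromLeftDerivedZero' F
  rw [p, reassoc_of% p]
  exact (α.naturality (P.π.f 0)).symm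

/-- The comparison map `Hom(X, Y) → Ext⁰(X, Y)`. -/
noncomputable def homToExtZero (X : (ModuleCat.{u} R)ᵒᵖ) (Y : ModuleCat.{u} R) :
    ((linearYoneda R (ModuleCat.{u} R)).obj Y).obj X ⟶
      ((Ext R (ModuleCat.{u} R) 0).obj X).obj Y :=
  ((homRightOp Y).fromLeftDerivedZero.app X.unop).unop

instance isIso_homToExtZero (X : (ModuleCat.{u} R)ᵒᵖ) (Y : ModuleCat.{u} R) :
    IsIso (homToExtZero X Y) :=
  have : IsIso ((homRightOp Y).fromLeftDerivedZero.app X.unop) := inferInstance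
  isIso_unop _

lemma homToExtZero_bijective (X : (ModuleCat.{u} R)ᵒᵖ) (Y : ModuleCat.{u} R) :
    Function.Bijective (homToExtZero X Y) :=
  (ConcreteCategory.isIso_iff_bijective (homToExtZero X Y)).1 inferInstance

lemma homToExtZero_naturality_left {X X' : (ModuleCat.{u} R)ᵒᵖ} (f : X ⟶ X')
    (Y : ModuleCat.{u} R) (x : X.unop ⟶ Y) :
    ((Ext R (ModuleCat.{u} R) 0).map f).app Y (homToExtZero X Y x) =
      homToExtZero X' Y (f.unop ≫ x : X'.unop ⟶ Y) := by
  have h := congrArg Quiver.Hom.unop ((homRightOp Y).fromLeftDerivedZero.naturality f.unop)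
  exact congr($h x)

lemma homToExtZero_naturality_right (X : (ModuleCat.{u} R)ᵒᵖ)
    {Y Y' : ModuleCat.{u} R} (f : Y ⟶ Y') (x : X.unop ⟶ Y) :
    ((Ext R (ModuleCat.{u} R) 0).obj X).map f (homToExtZero X Y x) =
      homToExtZero X Y' (x ≫ f : X.unop ⟶ Y') := by
  have h := congrArg Quiver.Hom.unop
    (leftDerived_zero_app_comp_fromLeftDerivedZero_app (homRightOpMap f) X.unop)
  exact congr($h x)

end ExtModule

section FilteredColimit

open Limits

variable {R : Type u} [CommRing R] {J : Type*} [Category* J] [IsFiltered J]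
  [PreservesColimitsOfShape J (forget (ModuleCat.{u} R))]

lemma exists_map_eq_zero_of_isColimit {F : J ⥤ ModuleCat.{u} R} {c : Cocone F}
    (hc : IsColimit c) {j : J} {x : F.obj j} (hx : c.ι.app j x = 0) :
    ∃ (k : J) (f : j ⟶ k), F.map f x = 0 := by
  obtain ⟨k, f, g, h⟩ := (Concrete.isColimit_rep_eq_iff_exists F hc x (0 : F.obj j)).1 (by
    rw [map_zero]; exact hx)
  exact ⟨k, f, by rw [h, map_zero]⟩

/-- Exactness passes to filtered colimits of modules. -/
lemma exact_of_isColimit {F G H : J ⥤ ModuleCat.{u} R} {c : Cocone F} {c' : Cocone G}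
    {c'' : Cocone H} (hc : IsColimit c) (hc' : IsColimit c') (hc'' : IsColimit c'')
    (α : F ⟶ G) (β : G ⟶ H) (hαβ : ∀ j, Function.Exact (α.app j) (β.app j))
    (a : c.pt ⟶ c'.pt) (b : c'.pt ⟶ c''.pt) (ha : ∀ j, c.ι.app j ≫ a = α.app j ≫ c'.ι.app j)
    (hb : ∀ j, c'.ι.app j ≫ b = β.app j ≫ c''.ι.app j) : Function.Exact a b := by
  intro y
  constructor
  · intro hy
    obtain ⟨j, y, rfl⟩ := Concrete.isColimit_exists_rep G hc' y
    have h₁ : c''.ι.app j (β.app j y) = 0 := by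
      rw [← hy]
      exact (congr($(hb j) y)).symm
    obtain ⟨k, f, hf⟩ := exists_map_eq_zero_of_isColimit hc'' h₁
    have h₂ : β.app k (G.map f y) = 0 := by
      rw [← hf]
      exact congr($(β.naturality f) y)
    obtain ⟨x, hx⟩ := (hαβ k _).1 h₂
    refine ⟨c.ι.app k x, ?_⟩
    have h₃ : a (c.ι.app k x) = c'.ι.app k (α.app k x) := congr($(ha k) x)
    rw [h₃, hx]
    exact congr($(c'.w f) y)
  · rintro ⟨x, rfl⟩
    obtain ⟨j, x, rfl⟩ := Concrete.isColimit_exists_rep F hc x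
    have h₁ : a (c.ι.app j x) = c'.ι.app j (α.app j x) := congr($(ha j) x)
    have h₂ : b (c'.ι.app j (α.app j x)) = c''.ι.app j (β.app j (α.app j x)) :=
      congr($(hb j) (α.app j x))
    rw [h₁, h₂, (hαβ j _).2 ⟨x, rfl⟩, map_zero]

end FilteredColimit

section LocalCohomology

open Limits Opposite

variable {R : Type u} [CommRing R] (I : Ideal R)

instance preservesColimitsOfShape_forget_moduleCat :
    PreservesColimitsOfShape ℕᵒᵖᵒᵖ (forget (ModuleCat.{u} R)) := by
  have := preservesFilteredColimitsOfSize_shrink.{0, u, 0, u} (forget (ModuleCat.{u} R))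
  infer_instance

/-- The diagram of the modules `Extⁱ(R/Iᵗ, M)`. -/
noncomputable abbrev extPowers (i : ℕ) (M : ModuleCat.{u} R) : ℕᵒᵖᵒᵖ ⥤ ModuleCat.{u} R :=
  (localCohomology.diagram (localCohomology.idealPowersDiagram I) i).flip.obj M

/-- The cocone exhibiting local cohomology as the colimit of `Extⁱ(R/Iᵗ, M)`. -/
noncomputable def localCohomologyCocone (i : ℕ) (M : ModuleCat.{u} R) :
    Cocone (extPowers I i M) :=
  have := localCohomology.hasColimitDiagram.{u, 0} (localCohomology.idealPowersDiagram I) i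
  { pt := (localCohomology I i).obj M
    ι :=
      { app := fun t => (colimit.ι (localCohomology.diagram
          (localCohomology.idealPowersDiagram I) i) t).app M
        naturality := fun s t f => by
          have h := congr_app (colimit.w (localCohomology.diagram
            (localCohomology.idealPowersDiagram I) i) f) M
          exact h.trans (Category.comp_id _).symm } }

/-- Local cohomology is the colimit of `Extⁱ(R/Iᵗ, M)`. -/
noncomputable def isColimitLocalCohomologyCocone (i : ℕ) (M : ModuleCat.{u} R) :
    IsColimit (localCohomologyCocone I i M) :=
  have := localCohomology.hasColimitDiagram.{u, 0} (localCohomology.idealPowersDiagram I) i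
  have : PreservesColimitsOfShape ℕᵒᵖᵒᵖ
      ((evaluation (ModuleCat.{u} R) (ModuleCat.{u} R)).obj M) := inferInstance
  isColimitOfPreserves ((evaluation _ _).obj M) (colimit.isColimit (localCohomology.diagram
    (localCohomology.idealPowersDiagram I) i))

lemma localCohomologyCocone_ι_naturality (i : ℕ) {M N : ModuleCat.{u} R} (f : M ⟶ N)
    (t : ℕᵒᵖᵒᵖ) :
    (localCohomologyCocone I i M).ι.app t ≫ (localCohomology I i).map f =
      ((localCohomology.diagram (localCohomology.idealPowersDiagram I) i).obj t).map f ≫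
        (localCohomologyCocone I i N).ι.app t :=
  have := localCohomology.hasColimitDiagram.{u, 0} (localCohomology.idealPowersDiagram I) i
  ((colimit.ι (localCohomology.diagram
          (localCohomology.idealPowersDiagram I) i) t).naturality f).symm

lemma localCohomology_map_exact {S : ShortComplex (ModuleCat.{u} R)} (hS : S.ShortExact)
    (i : ℕ) :
    Function.Exact ((localCohomology I i).map S.f) ((localCohomology I i).map S.g) :=
  exact_of_isColimit (isColimitLocalCohomologyCocone I i S.X₁)
    (isColimitLocalCohomologyCocone I i S.X₂) (isColimitLocalCohomologyCocone I i S.X₃)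
    ((localCohomology.diagram (localCohomology.idealPowersDiagram I) i).flip.map S.f)
    ((localCohomology.diagram (localCohomology.idealPowersDiagram I) i).flip.map S.g)
    (fun _ => Ext_map_exact hS i _) _ _
    (fun t => localCohomologyCocone_ι_naturality I i S.f t)
    (fun t => localCohomologyCocone_ι_naturality I i S.g t)

lemma exists_localCohomology_connecting {S : ShortComplex (ModuleCat.{u} R)}
    (hS : S.ShortExact) (i : ℕ) :
    ∃ δ : (localCohomology I i).obj S.X₃ ⟶ (localCohomology I (i + 1)).obj S.X₁,
      Function.Exact ((localCohomology I i).map S.g) δ ∧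
        Function.Exact δ ((localCohomology I (i + 1)).map S.f) := by
  obtain ⟨d, hd⟩ := exists_Ext_connecting hS i
  let α : extPowers I i S.X₃ ⟶ extPowers I (i + 1) S.X₁ :=
    Functor.whiskerLeft (localCohomology.ringModIdeals
      (localCohomology.idealPowersDiagram I)).op d
  let δ := IsColimit.map (isColimitLocalCohomologyCocone I i S.X₃)
    (localCohomologyCocone I (i + 1) S.X₁) α
  have hδ (t) : (localCohomologyCocone I i S.X₃).ι.app t ≫ δ =
      α.app t ≫ (localCohomologyCocone I (i + 1) S.X₁).ι.app t :=
    IsColimit.ι_map _ _ _ _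
  refine ⟨δ, ?_, ?_⟩
  · exact exact_of_isColimit (isColimitLocalCohomologyCocone I i S.X₂)
      (isColimitLocalCohomologyCocone I i S.X₃)
      (isColimitLocalCohomologyCocone I (i + 1) S.X₁)
      ((localCohomology.diagram (localCohomology.idealPowersDiagram I) i).flip.map S.g) α
      (fun _ => (hd _).1) _ _ (fun t => localCohomologyCocone_ι_naturality I i S.g t) hδ
  · exact exact_of_isColimit (isColimitLocalCohomologyCocone I i S.X₃)
      (isColimitLocalCohomologyCocone I (i + 1) S.X₁)
      (isColimitLocalCohomologyCocone I (i + 1) S.X₂) α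
      ((localCohomology.diagram (localCohomology.idealPowersDiagram I) (i + 1)).flip.map S.f)
      (fun _ => (hd _).2) _ _ hδ (fun t => localCohomologyCocone_ι_naturality I (i + 1) S.f t)

lemma exists_localCohomology_rep {i : ℕ} {M : ModuleCat.{u} R}
    (x : (localCohomology I i).obj M) :
    ∃ (t : ℕᵒᵖᵒᵖ) (y : (extPowers I i M).obj t), (localCohomologyCocone I i M).ι.app t y = x :=
  Concrete.isColimit_exists_rep _ (isColimitLocalCohomologyCocone I i M) x

lemma localCohomology_map_smul_id (i : ℕ) (M : ModuleCat.{u} R) (a : R) :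
    (localCohomology I i).map (a • 𝟙 M) = a • 𝟙 _ := by
  refine (isColimitLocalCohomologyCocone I i M).hom_ext fun t => ?_
  refine (localCohomologyCocone_ι_naturality I i _ t).trans ?_
  have h : ((localCohomology.diagram (localCohomology.idealPowersDiagram I) i).obj t).map
      (a • 𝟙 M) = a • 𝟙 _ := Ext_map_smul_id a i _ M
  rw [h]
  ext x
  change (localCohomologyCocone I i M).ι.app t (a • x) = a • (localCohomologyCocone I i M).ι.app t x
  rw [map_smul]

lemma subsingleton_localCohomology_succ_of_injective (i : ℕ) (J : ModuleCat.{u} R)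
    [Injective J] : Subsingleton ((localCohomology I (i + 1)).obj J) := by
  refine subsingleton_of_forall_eq 0 fun x => ?_
  obtain ⟨t, y, rfl⟩ := exists_localCohomology_rep I x
  have : Subsingleton ((extPowers I (i + 1) J).obj t) :=
    subsingleton_Ext_succ_of_injective i _ J
  rw [Subsingleton.elim y 0, map_zero]
  rfl

end LocalCohomology

section LocalCohomologyZero

open Limits Opposite

variable {R : Type u} [CommRing R] (I : Ideal R)

/-- The cyclic module `R/Iᵗ`, as an object of the opposite category. -/
abbrev modPow (t : ℕᵒᵖᵒᵖ) : (ModuleCat.{u} R)ᵒᵖ :=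
  op (ModuleCat.of R (R ⧸ I ^ t.unop.unop))

/-- The class in `H⁰` of a morphism `R/Iᵗ ⟶ M`. -/
noncomputable def localCohomologyZeroMk (M : ModuleCat.{u} R) (t : ℕᵒᵖᵒᵖ)
    (φ : (R ⧸ I ^ t.unop.unop) →ₗ[R] M) : (localCohomology I 0).obj M :=
  (localCohomologyCocone I 0 M).ι.app t (homToExtZero (modPow I t) M (ModuleCat.ofHom φ))

lemma exists_localCohomologyZeroMk_eq {M : ModuleCat.{u} R} (x : (localCohomology I 0).obj M) :
    ∃ (t : ℕᵒᵖᵒᵖ) (φ : (R ⧸ I ^ t.unop.unop) →ₗ[R] M), localCohomologyZeroMk I M t φ = x := by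
  obtain ⟨t, y, rfl⟩ := exists_localCohomology_rep I x
  obtain ⟨φ, hφ⟩ := (homToExtZero_bijective (modPow I t) M).2 y
  exact ⟨t, ModuleCat.Hom.hom φ, congrArg ((localCohomologyCocone I 0 M).ι.app t) hφ⟩

/-- The element of a module given by a morphism `R/Iᵗ ⟶ M`. -/
def evalOne (M : ModuleCat.{u} R) (t : ℕᵒᵖᵒᵖ) :
    ((linearYoneda R (ModuleCat.{u} R)).obj M).obj (modPow I t) ⟶ M :=
  ModuleCat.ofHom
    { toFun := fun φ : ModuleCat.of R (R ⧸ I ^ t.unop.unop) ⟶ M =>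
        φ.hom (Submodule.Quotient.mk 1)
      map_add' := fun _ _ => rfl
      map_smul' := fun _ _ => rfl }

/-- Evaluation at one, as a map from the diagram computing `H⁰`. -/
noncomputable def extZeroEval (M : ModuleCat.{u} R) (t : ℕᵒᵖᵒᵖ) :
    (extPowers I 0 M).obj t ⟶ M :=
  (asIso (homToExtZero (modPow I t) M)).inv ≫ evalOne I M t

lemma extZeroEval_homToExtZero (M : ModuleCat.{u} R) (t : ℕᵒᵖᵒᵖ)
    (φ : (R ⧸ I ^ t.unop.unop) →ₗ[R] M) :
    extZeroEval I M t (homToExtZero (modPow I t) M (ModuleCat.ofHom φ)) =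
      φ (Submodule.Quotient.mk 1) := by
  have h : homToExtZero (modPow I t) M ≫ extZeroEval I M t = evalOne I M t :=
    (asIso (homToExtZero (modPow I t) M)).hom_inv_id_assoc _
  exact congr($h (ModuleCat.ofHom φ))

lemma extPowers_map_homToExtZero (M : ModuleCat.{u} R) {s t : ℕᵒᵖᵒᵖ} (f : s ⟶ t)
    (φ : (R ⧸ I ^ s.unop.unop) →ₗ[R] M) :
    (extPowers I 0 M).map f (homToExtZero (modPow I s) M (ModuleCat.ofHom φ)) =
      homToExtZero (modPow I t) M (ModuleCat.ofHom (φ ∘ₗ Submodule.mapQ _ _ LinearMap.id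
        (Ideal.pow_le_pow_right f.unop.unop.down.down))) :=
  homToExtZero_naturality_left _ M _

lemma extPowers_map_extZeroEval (M : ModuleCat.{u} R) {s t : ℕᵒᵖᵒᵖ} (f : s ⟶ t) :
    (extPowers I 0 M).map f ≫ extZeroEval I M t = extZeroEval I M s := by
  ext y
  obtain ⟨φ, rfl⟩ := (homToExtZero_bijective (modPow I s) M).2 y
  have h := extPowers_map_homToExtZero I M f (ModuleCat.Hom.hom φ)
  have h' := extZeroEval_homToExtZero I M s (ModuleCat.Hom.hom φ)
  refine Eq.trans (congrArg (extZeroEval I M t) h) ?_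
  rw [extZeroEval_homToExtZero]
  exact h'.symm

/-- The canonical map `H⁰(M) → M`. -/
noncomputable def localCohomologyZeroEval (M : ModuleCat.{u} R) :
    (localCohomology I 0).obj M ⟶ M :=
  (isColimitLocalCohomologyCocone I 0 M).desc
    { pt := M
      ι :=
        { app := fun t => extZeroEval I M t
          naturality := fun s t f => by
            exact (extPowers_map_extZeroEval I M f).trans (Category.comp_id _).symm } }

lemma localCohomologyZeroEval_mk (M : ModuleCat.{u} R) (t : ℕᵒᵖᵒᵖ)
    (φ : (R ⧸ I ^ t.unop.unop) →ₗ[R] M) :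
    localCohomologyZeroEval I M (localCohomologyZeroMk I M t φ) =
      φ (Submodule.Quotient.mk 1) := by
  rw [← extZeroEval_homToExtZero]
  have h : (localCohomologyCocone I 0 M).ι.app t ≫ localCohomologyZeroEval I M =
    extZeroEval I M t := IsColimit.fac _ _ _
  exact congr($h (homToExtZero (modPow I t) M (ModuleCat.ofHom φ)))

lemma localCohomologyZeroEval_injective (M : ModuleCat.{u} R) :
    Function.Injective (localCohomologyZeroEval I M) := by
  rw [injective_iff_map_eq_zero]
  intro x hx
  obtain ⟨t, φ, rfl⟩ := exists_localCohomologyZeroMk_eq I x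
  rw [localCohomologyZeroEval_mk] at hx
  have : φ = 0 := by
    ext
    exact hx
  subst this
  change (localCohomologyCocone I 0 M).ι.app t (homToExtZero (modPow I t) M 0) = 0
  erw [map_zero, map_zero]

lemma exists_localCohomologyZeroEval_eq {M : ModuleCat.{u} R} {m : M} {t : ℕ}
    (hm : ∀ a ∈ I ^ t, a • m = 0) : ∃ x, localCohomologyZeroEval I M x = m := by
  let φ : (R ⧸ I ^ t) →ₗ[R] M := Submodule.liftQ _ (LinearMap.toSpanSingleton R M m)
    fun a ha => hm a ha
  refine ⟨localCohomologyZeroMk I M (op (op t)) φ, ?_⟩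
  rw [localCohomologyZeroEval_mk]
  exact (Submodule.liftQ_apply _ _ _).trans (one_smul R m)

lemma exists_pow_smul_eq_zero_of_localCohomology_zero {M : ModuleCat.{u} R}
    (x : (localCohomology I 0).obj M) : ∃ t : ℕ, ∀ a ∈ I ^ t, a • x = 0 := by
  obtain ⟨t, φ, rfl⟩ := exists_localCohomologyZeroMk_eq I x
  refine ⟨t.unop.unop, fun a ha => localCohomologyZeroEval_injective I M ?_⟩
  rw [map_smul, localCohomologyZeroEval_mk, map_zero, ← map_smul, ← Submodule.Quotient.mk_smul,
    (Submodule.Quotient.mk_eq_zero _).2 (by simpa using ha), map_zero]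

lemma localCohomologyZeroEval_naturality {M N : ModuleCat.{u} R} (f : M ⟶ N)
    (x : (localCohomology I 0).obj M) :
    localCohomologyZeroEval I N ((localCohomology I 0).map f x) =
      f (localCohomologyZeroEval I M x) := by
  obtain ⟨t, φ, rfl⟩ := exists_localCohomologyZeroMk_eq I x
  have h : (localCohomology I 0).map f (localCohomologyZeroMk I M t φ) =
      localCohomologyZeroMk I N t (ModuleCat.Hom.hom f ∘ₗ φ) := by
    have h₁ := localCohomologyCocone_ι_naturality I 0 f t
    have h₂ := homToExtZero_naturality_right (modPow I t) f (ModuleCat.ofHom φ)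
    exact congr($h₁ (homToExtZero (modPow I t) M (ModuleCat.ofHom φ))).trans
      (congrArg ((localCohomologyCocone I 0 N).ι.app t) h₂)
  rw [h, localCohomologyZeroEval_mk, localCohomologyZeroEval_mk]
  rfl

end LocalCohomologyZero

section Unbundled

variable {R : Type u} [CommRing R] (I : Ideal R)
  {M N P : Type u} [AddCommGroup M] [Module R M] [AddCommGroup N] [Module R N]
  [AddCommGroup P] [Module R P]

variable (M) in
/-- Local cohomology of an unbundled module. -/
noncomputable abbrev LocCoh (i : ℕ) : Type u := (localCohomology I i).obj (ModuleCat.of R M)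

/-- The map on local cohomology induced by a linear map. -/
noncomputable def locCohMap (i : ℕ) (f : M →ₗ[R] N) : LocCoh I M i →ₗ[R] LocCoh I N i :=
  ((localCohomology I i).map (ModuleCat.ofHom f)).hom

lemma shortExact_ofHom {f : M →ₗ[R] N} {g : N →ₗ[R] P} (hf : Function.Injective f)
    (hfg : Function.Exact f g) (hg : Function.Surjective g) :
    (ShortComplex.mk (ModuleCat.ofHom f) (ModuleCat.ofHom g) (by
      ext x
      exact hfg.apply_apply_eq_zero x)).ShortExact where
  exact := (ShortComplex.ShortExact.moduleCat_exact_iff_function_exact _).2 hfg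
  mono_f := (ModuleCat.mono_iff_injective _).2 hf
  epi_g := (ModuleCat.epi_iff_surjective _).2 hg

lemma locCohMap_exact {f : M →ₗ[R] N} {g : N →ₗ[R] P} (hf : Function.Injective f)
    (hfg : Function.Exact f g) (hg : Function.Surjective g) (i : ℕ) :
    Function.Exact (locCohMap I i f) (locCohMap I i g) :=
  localCohomology_map_exact I (shortExact_ofHom hf hfg hg) i

lemma exists_locCoh_connecting {f : M →ₗ[R] N} {g : N →ₗ[R] P} (hf : Function.Injective f)
    (hfg : Function.Exact f g) (hg : Function.Surjective g) (i : ℕ) :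
    ∃ δ : LocCoh I P i →ₗ[R] LocCoh I M (i + 1),
      Function.Exact (locCohMap I i g) δ ∧ Function.Exact δ (locCohMap I (i + 1) f) := by
  obtain ⟨δ, h⟩ := exists_localCohomology_connecting I (shortExact_ofHom hf hfg hg) i
  exact ⟨δ.hom, h⟩

lemma locCohMap_lsmul (i : ℕ) (a : R) (x : LocCoh I M i) :
    locCohMap I i (LinearMap.lsmul R M a) x = a • x := by
  have h := localCohomology_map_smul_id I i (ModuleCat.of R M) a
  exact congr($h x)

lemma subsingleton_locCoh_succ_of_injective [Module.Injective R M] (i : ℕ) :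
    Subsingleton (LocCoh I M (i + 1)) := by
  have := Module.injective_object_of_injective_module R M
  exact subsingleton_localCohomology_succ_of_injective I i (ModuleCat.of R M)

variable (M) in
/-- The canonical injection `H⁰(M) → M`. -/
noncomputable def locCohZeroEval : LocCoh I M 0 →ₗ[R] M :=
  (localCohomologyZeroEval I (ModuleCat.of R M)).hom

variable (M) in
lemma locCohZeroEval_injective : Function.Injective (locCohZeroEval I M) :=
  localCohomologyZeroEval_injective I (ModuleCat.of R M)

lemma locCohZeroEval_naturality (f : M →ₗ[R] N) (x : LocCoh I M 0) :
    locCohZeroEval I N (locCohMap I 0 f x) = f (locCohZeroEval I M x) :=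
  localCohomologyZeroEval_naturality I (ModuleCat.ofHom f) x

variable (M) in
lemma exists_injective_embedding : ∃ (J : Type u) (_ : AddCommGroup J) (_ : Module R J)
    (f : M →ₗ[R] J), Module.Injective R J ∧ Function.Injective f := by
  let J : ModuleCat.{u} R := Injective.under (ModuleCat.of R M)
  have : Injective (ModuleCat.of R J) := inferInstanceAs (Injective (Injective.under _))
  exact ⟨J, inferInstance, inferInstance, (Injective.ι (ModuleCat.of R M)).hom,
    Module.injective_module_of_injective_object R J,
    (ModuleCat.mono_iff_injective _).1 inferInstance⟩

variable (M) in
/-- The submodule of elements annihilated by a power of an ideal. -/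
def powTorsion : Submodule R M where
  carrier := {m | ∃ t : ℕ, ∀ a ∈ I ^ t, a • m = 0}
  zero_mem' := ⟨0, fun a _ => smul_zero a⟩
  add_mem' := by
    rintro m n ⟨s, hs⟩ ⟨t, ht⟩
    refine ⟨max s t, fun a ha => ?_⟩
    rw [smul_add, hs a (Ideal.pow_le_pow_right (le_max_left s t) ha),
      ht a (Ideal.pow_le_pow_right (le_max_right s t) ha), add_zero]
  smul_mem' := by
    rintro r m ⟨s, hs⟩
    exact ⟨s, fun a ha => by rw [smul_comm, hs a ha, smul_zero]⟩

lemma range_locCohZeroEval : LinearMap.range (locCohZeroEval I M) = powTorsion I M := by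
  apply le_antisymm
  · rintro _ ⟨x, rfl⟩
    obtain ⟨t, ht⟩ := exists_pow_smul_eq_zero_of_localCohomology_zero I x
    exact ⟨t, fun a ha => by rw [← map_smul, ht a ha, map_zero]⟩
  · rintro m ⟨t, ht⟩
    exact exists_localCohomologyZeroEval_eq I (M := ModuleCat.of R M) ht

lemma powTorsion_map (f : M →ₗ[R] N) {m : M} (hm : m ∈ powTorsion I M) :
    f m ∈ powTorsion I N := by
  obtain ⟨t, ht⟩ := hm
  exact ⟨t, fun a ha => by rw [← map_smul, ht a ha, map_zero]⟩

lemma powTorsion_eq_top_of_surjective {f : M →ₗ[R] N} (hf : Function.Surjective f)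
    (hM : powTorsion I M = ⊤) : powTorsion I N = ⊤ := by
  rw [eq_top_iff]
  intro n _
  obtain ⟨m, rfl⟩ := hf n
  exact powTorsion_map I f (hM ▸ Submodule.mem_top)

lemma powTorsion_eq_top_of_injective {f : M →ₗ[R] N} (hf : Function.Injective f)
    (hN : powTorsion I N = ⊤) : powTorsion I M = ⊤ := by
  rw [eq_top_iff]
  intro m _
  obtain ⟨t, ht⟩ : f m ∈ powTorsion I N := hN ▸ Submodule.mem_top
  exact ⟨t, fun a ha => hf (by rw [map_smul, ht a ha, map_zero])⟩

variable (M) in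
lemma powTorsion_powTorsion : powTorsion I (powTorsion I M) = ⊤ := by
  rw [eq_top_iff]
  rintro ⟨m, t, ht⟩ _
  exact ⟨t, fun a ha => Subtype.ext (ht a ha)⟩

/-- Local cohomology modules are torsion with respect to the ideal. -/
lemma powTorsion_locCoh (i : ℕ) : powTorsion I (LocCoh I M i) = ⊤ := by
  induction i generalizing M with
  | zero =>
    rw [eq_top_iff]
    intro x _
    exact exists_pow_smul_eq_zero_of_localCohomology_zero I x
  | succ i ih =>
    obtain ⟨J, _, _, f, hJ, hf⟩ := exists_injective_embedding (R := R) M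
    obtain ⟨δ, -, hδ⟩ := exists_locCoh_connecting I hf (LinearMap.exact_map_mkQ_range f)
      (Submodule.mkQ_surjective _) i
    have := subsingleton_locCoh_succ_of_injective I (M := J) i
    exact powTorsion_eq_top_of_surjective I
      (fun y => (hδ y).1 (Subsingleton.elim _ _)) ih

lemma exists_pow_smul_eq_zero_of_finite [Module.Finite R M] (hM : powTorsion I M = ⊤) :
    ∃ t : ℕ, ∀ a ∈ I ^ t, ∀ m : M, a • m = 0 := by
  obtain ⟨S, hS⟩ := Module.Finite.fg_top (R := R) (M := M)
  have h (m : M) : ∃ t : ℕ, ∀ a ∈ I ^ t, a • m = 0 := (hM ▸ Submodule.mem_top : m ∈ powTorsion I M)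
  choose t ht using h
  refine ⟨S.sup t, fun a ha m => ?_⟩
  have : m ∈ Submodule.span R (S : Set M) := hS ▸ Submodule.mem_top
  induction this using Submodule.span_induction with
  | mem x hx => exact ht x a (Ideal.pow_le_pow_right (Finset.le_sup hx) ha)
  | zero => exact smul_zero a
  | add x y _ _ hx hy => rw [smul_add, hx, hy, add_zero]
  | smul r x _ hx => rw [smul_comm, hx, smul_zero]

variable (M) in
/-- Over a Noetherian ring, the torsion submodule of an injective module is injective. -/
lemma injective_powTorsion [IsNoetherianRing R] [Module.Injective R M] :
    Module.Injective R (powTorsion I M) := by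
  apply Module.Baer.injective
  intro K f
  have hK : powTorsion I (LinearMap.range f) = ⊤ :=
    powTorsion_eq_top_of_injective I (Submodule.injective_subtype _) (powTorsion_powTorsion I M)
  obtain ⟨t, ht⟩ := exists_pow_smul_eq_zero_of_finite I hK
  obtain ⟨k, hk⟩ := Ideal.exists_pow_inf_eq_pow_smul I K
  have hs := hk (k + t) (Nat.le_add_right k t)
  rw [Nat.add_sub_cancel_left] at hs
  let φ : K →ₗ[R] R ⧸ I ^ (k + t) := (I ^ (k + t)).mkQ ∘ₗ K.subtype
  let g : K →ₗ[R] M := (powTorsion I M).subtype ∘ₗ f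
  have hg : LinearMap.ker φ ≤ LinearMap.ker g := by
    intro x hx
    have hx₁ : (x : R) ∈ I ^ (k + t) • (⊤ : Submodule R R) ⊓ K := by
      refine ⟨?_, x.2⟩
      simpa using (Submodule.Quotient.mk_eq_zero _).1 hx
    rw [hs] at hx₁
    have hx₂ : (x : R) ∈ Submodule.map K.subtype (I ^ t • (⊤ : Submodule R K)) := by
      rw [Submodule.map_smul'', Submodule.map_top, Submodule.range_subtype]
      exact Submodule.smul_mono le_rfl inf_le_right hx₁
    obtain ⟨y, hy, hyx⟩ := hx₂
    obtain rfl : y = x := Subtype.ext hyx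
    refine Submodule.smul_le.2 (fun a ha z _ => ?_) hy
    have h := ht a ha ⟨f z, z, rfl⟩
    have h' : a • f z = 0 := congrArg Subtype.val h
    rw [LinearMap.mem_ker, map_smul, LinearMap.comp_apply, ← map_smul, h', map_zero]
  obtain ⟨h, hh⟩ := Module.Injective.out (R := R) (Q := M) (Submodule.liftQ _ φ le_rfl)
    (LinearMap.ker_eq_bot.1 (Submodule.ker_liftQ_eq_bot _ _ _ le_rfl))
    (Submodule.liftQ _ g hg)
  let G : R →ₗ[R] M := h ∘ₗ (I ^ (k + t)).mkQ
  have hG (r : R) : G r ∈ powTorsion I M := by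
    refine ⟨k + t, fun a ha => ?_⟩
    have h0 : (I ^ (k + t)).mkQ (a • r) = 0 := by
      exact (Submodule.Quotient.mk_eq_zero _).2 (Ideal.mul_mem_right r _ ha)
    rw [← map_smul]
    simp only [G, LinearMap.comp_apply, h0, map_zero]
  refine ⟨G.codRestrict _ hG, fun x hx => Subtype.ext ?_⟩
  exact hh (Submodule.Quotient.mk ⟨x, hx⟩)

lemma exists_injective_embedding_of_powTorsion [IsNoetherianRing R]
    (hM : powTorsion I M = ⊤) : ∃ (J : Type u) (_ : AddCommGroup J) (_ : Module R J)
    (f : M →ₗ[R] J), Function.Injective f ∧ Module.Injective R J ∧ powTorsion I J = ⊤ := by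
  obtain ⟨J, _, _, f, hJ, hf⟩ := exists_injective_embedding (R := R) M
  have h (m : M) : f m ∈ powTorsion I J := powTorsion_map I f (hM ▸ Submodule.mem_top)
  exact ⟨powTorsion I J, inferInstance, inferInstance, f.codRestrict _ h,
    fun x y hxy => hf (congrArg Subtype.val hxy), injective_powTorsion I J,
    powTorsion_powTorsion I J⟩

lemma locCohMap_zero_surjective {f : M →ₗ[R] N} (hf : Function.Surjective f)
    (hM : powTorsion I M = ⊤) : Function.Surjective (locCohMap I 0 f) := by
  intro y
  obtain ⟨m, hm⟩ := hf (locCohZeroEval I N y)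
  obtain ⟨x, hx⟩ : m ∈ LinearMap.range (locCohZeroEval I M) := by
    rw [range_locCohZeroEval, hM]
    exact Submodule.mem_top
  exact ⟨x, locCohZeroEval_injective I N (by rw [locCohZeroEval_naturality, hx, hm])⟩

/-- Torsion modules have no higher local cohomology. -/
lemma subsingleton_locCoh_succ_of_powTorsion_eq_top [IsNoetherianRing R]
    (hM : powTorsion I M = ⊤) (i : ℕ) : Subsingleton (LocCoh I M (i + 1)) := by
  induction i generalizing M with
  | zero =>
    obtain ⟨J, _, _, f, hf, hJ, hJt⟩ := exists_injective_embedding_of_powTorsion I hM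
    obtain ⟨δ, h, hδ⟩ := exists_locCoh_connecting I hf (LinearMap.exact_map_mkQ_range f)
      (Submodule.mkQ_surjective _) 0
    have := subsingleton_locCoh_succ_of_injective I (M := J) 0
    refine subsingleton_of_forall_eq 0 fun y => ?_
    obtain ⟨x, rfl⟩ := (hδ y).1 (Subsingleton.elim _ _)
    rw [h]
    exact locCohMap_zero_surjective I (Submodule.mkQ_surjective _) hJt x
  | succ i ih =>
    obtain ⟨J, _, _, f, hf, hJ, hJt⟩ := exists_injective_embedding_of_powTorsion I hM
    obtain ⟨δ, -, hδ⟩ := exists_locCoh_connecting I hf (LinearMap.exact_map_mkQ_range f)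
      (Submodule.mkQ_surjective _) (i + 1)
    have := subsingleton_locCoh_succ_of_injective I (M := J) (i + 1)
    have := ih (powTorsion_eq_top_of_surjective I
      (Submodule.mkQ_surjective (LinearMap.range f)) hJt)
    refine subsingleton_of_forall_eq 0 fun y => ?_
    obtain ⟨x, rfl⟩ := (hδ y).1 (Subsingleton.elim _ _)
    rw [Subsingleton.elim x 0, map_zero]

end Unbundled

section CommutativeAlgebra

variable {R : Type u} [CommRing R]

/-- Prime avoidance: an ideal contained in no member of a finite set of primes contains an element
lying in none of them. -/
lemma exists_mem_notMem_of_finite_primes (K : Ideal R) {T : Set (Ideal R)} (hT : T.Finite)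
    (hp : ∀ p ∈ T, p.IsPrime) (hK : ∀ p ∈ T, ¬ K ≤ p) : ∃ x ∈ K, ∀ p ∈ T, x ∉ p := by
  by_contra! h
  have hsub : (K : Set R) ⊆ ⋃ p ∈ T, (id p : Ideal R) := fun x hx => by
    obtain ⟨p, hpT, hxp⟩ := h x hx
    exact Set.mem_biUnion hpT hxp
  obtain ⟨p, hpT, hKp⟩ :=
    (Ideal.subset_union_prime_finite hT (f := id) ⊤ ⊤ fun p hpT _ _ => hp p hpT).1 hsub
  exact hK p hpT hKp

section Melkersson

variable {M : Type*} [AddCommGroup M] [Module R M]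

/-- A module that is torsion with respect to an element, with Artinian kernel of multiplication by
that element, is Artinian. -/
lemma isArtinian_of_isArtinian_ker_lsmul (x : R) (hx : ∀ m : M, ∃ t : ℕ, x ^ t • m = 0)
    [IsArtinian R (LinearMap.ker (LinearMap.lsmul R M x))] : IsArtinian R M := by
  rw [← monotone_stabilizes_iff_artinian]
  intro f
  let A := LinearMap.ker (LinearMap.lsmul R M x)
  let L (j t : ℕ) : Submodule R A :=
    (Submodule.map (LinearMap.lsmul R M (x ^ t)) (OrderDual.ofDual (f j))).comap A.subtype
  have hL (j t : ℕ) (y : A) : y ∈ L j t ↔ ∃ z ∈ OrderDual.ofDual (f j), x ^ t • z = y := Iff.rfl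
  have hf {i j : ℕ} (h : i ≤ j) : OrderDual.ofDual (f j) ≤ OrderDual.ofDual (f i) := f.monotone h
  have hLj {i j : ℕ} (t : ℕ) (h : i ≤ j) : L j t ≤ L i t := fun y ⟨z, hz, hzy⟩ =>
    ⟨z, hf h hz, hzy⟩
  have hLt (j : ℕ) {s t : ℕ} (h : s ≤ t) : L j t ≤ L j s := by
    rintro y ⟨z, hz, hzy⟩
    refine ⟨x ^ (t - s) • z, Submodule.smul_mem _ _ hz, ?_⟩
    change x ^ s • x ^ (t - s) • z = y
    rw [smul_smul, ← pow_add, Nat.add_sub_cancel' h]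
    exact hzy
  have hstab (g : ℕ → Submodule R A) (hg : ∀ i j, i ≤ j → g j ≤ g i) :
      ∃ n, ∀ m, n ≤ m → g n = g m :=
    monotone_stabilizes_iff_artinian.2 ‹_› (⟨g, fun i j h => hg i j h⟩ : ℕ →o (Submodule R A)ᵒᵈ)
  obtain ⟨k, hk⟩ := hstab (fun k => L k k) fun i j h => (hLj j h).trans (hLt i h)
  choose b hb using fun t => hstab (fun j => L j t) fun i j h => hLj t h
  let n := max k ((Finset.range k).sup b)
  have hn (t m : ℕ) (hm : n ≤ m) : L n t ≤ L m t := by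
    by_cases ht : t < k
    · have hbn : b t ≤ n := (Finset.le_sup (Finset.mem_range.2 ht)).trans (le_max_right _ _)
      exact ((hb t n hbn).symm.trans (hb t m (hbn.trans hm))).le
    · push Not at ht
      calc L n t ≤ L n k := hLt n ht
        _ ≤ L k k := hLj k (le_max_left _ _)
        _ = L (max m t) (max m t) := hk _ (ht.trans (le_max_right _ _))
        _ ≤ L m (max m t) := hLj _ (le_max_left _ _)
        _ ≤ L m t := hLt _ (le_max_right _ _)
  refine ⟨n, fun m hm => le_antisymm (f.monotone hm) ?_⟩
  intro z hz
  obtain ⟨t, ht⟩ := hx z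
  induction t generalizing z with
  | zero =>
    rw [pow_zero, one_smul] at ht
    exact ht ▸ Submodule.zero_mem _
  | succ t ih =>
    let y : A := ⟨x ^ t • z, by
      rw [LinearMap.mem_ker, LinearMap.lsmul_apply, smul_smul, ← pow_succ', ht]⟩
    obtain ⟨w, hw, hwy⟩ := (hL m t y).1 (hn t m hm ((hL n t y).2 ⟨z, hz, rfl⟩))
    have h := ih (Submodule.sub_mem _ hz (hf hm hw)) (by rw [smul_sub, hwy, sub_self])
    have h' := Submodule.add_mem _ h hw
    rwa [sub_add_cancel] at h'

end Melkersson

section FiniteLength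

variable [IsLocalRing R] [IsNoetherianRing R] {M : Type*} [AddCommGroup M] [Module R M]

open IsLocalRing

lemma isNoetherian_iff_isArtinian_of_maximalIdeal_pow (k : ℕ)
    (hk : ∀ a ∈ maximalIdeal R ^ k, ∀ m : M, a • m = 0) :
    IsNoetherian R M ↔ IsArtinian R M := by
  induction k generalizing M with
  | zero =>
    have : Subsingleton M := subsingleton_of_forall_eq 0 fun m => by
      simpa using hk 1 (by simp) m
    exact ⟨fun _ => inferInstance, fun _ => inferInstance⟩
  | succ k ih =>
    rw [isNoetherian_iff_submodule_quotient (maximalIdeal R • (⊤ : Submodule R M)),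
      isArtinian_iff_submodule_quotient (maximalIdeal R • (⊤ : Submodule R M))]
    refine and_congr (ih ?_) ?_
    · rintro a ha ⟨m, hm⟩
      refine Subtype.ext ?_
      change a • m = 0
      have h : maximalIdeal R • (⊤ : Submodule R M) ≤
          LinearMap.ker (LinearMap.lsmul R M a) := Submodule.smul_le.2 fun b hb n _ => by
        rw [LinearMap.mem_ker, LinearMap.lsmul_apply, smul_smul]
        exact hk _ (by rw [pow_succ]; exact Ideal.mul_mem_mul ha hb) n
      exact h hm
    · let _ := Ideal.Quotient.field (maximalIdeal R)
      have h : IsNoetherian (R ⧸ maximalIdeal R) (M ⧸ maximalIdeal R • (⊤ : Submodule R M)) ↔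
          IsArtinian (R ⧸ maximalIdeal R) (M ⧸ maximalIdeal R • (⊤ : Submodule R M)) :=
        IsSemiprimaryRing.isNoetherian_iff_isArtinian
      refine ⟨fun _ => ?_, fun _ => ?_⟩
      · have := h.1 (isNoetherian_of_tower R inferInstance)
        exact isArtinian_of_surjective_algebraMap (R := R ⧸ maximalIdeal R)
          Ideal.Quotient.mk_surjective
      · have := h.2 (isArtinian_of_tower R inferInstance)
        have : Module.Finite R (M ⧸ maximalIdeal R • (⊤ : Submodule R M)) :=
          Module.Finite.trans (R ⧸ maximalIdeal R) _
        infer_instance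

end FiniteLength

end CommutativeAlgebra

section SecondaryDecomposition

variable {R : Type u} [CommRing R] {H : Type*} [AddCommGroup H] [Module R H] [IsArtinian R H]

/-- On a sup-irreducible submodule of an Artinian module, every ring element acts either
surjectively or nilpotently. -/
lemma SupIrred.smul_surjective_or_mem_radical {S : Submodule R H} (hS : SupIrred S) (r : R) :
    S ≤ S.map (LinearMap.lsmul R H r) ∨ r ∈ S.annihilator.radical := by
  let g (n : ℕ) : Submodule R H := S.map (LinearMap.lsmul R H (r ^ n))
  have hg {i j : ℕ} (h : i ≤ j) : g j ≤ g i := by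
    rintro _ ⟨y, hy, rfl⟩
    refine ⟨r ^ (j - i) • y, S.smul_mem _ hy, ?_⟩
    simp only [LinearMap.lsmul_apply]
    rw [smul_smul, ← pow_add, Nat.add_sub_cancel' h]
  obtain ⟨n, hn⟩ := monotone_stabilizes_iff_artinian.2 ‹IsArtinian R H›
    (⟨fun n => OrderDual.toDual (g n), fun i j h => hg h⟩ : ℕ →o (Submodule R H)ᵒᵈ)
  have hn' (m : ℕ) (hm : n ≤ m) : g n = g m := hn m hm
  have hsup : g n ⊔ S ⊓ LinearMap.ker (LinearMap.lsmul R H (r ^ n)) = S := by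
    refine le_antisymm (sup_le ?_ inf_le_left) fun y hy => ?_
    · rintro _ ⟨y, hy, rfl⟩
      exact S.smul_mem _ hy
    · obtain ⟨z, hz, hzy⟩ := (hn' (n + n) (by lia)).le ⟨y, hy, rfl⟩
      simp only [LinearMap.lsmul_apply] at hzy
      refine Submodule.mem_sup.2 ⟨r ^ n • z, ⟨z, hz, rfl⟩, y - r ^ n • z,
        ⟨S.sub_mem hy (S.smul_mem _ hz), ?_⟩, by abel⟩
      simp only [SetLike.mem_coe, LinearMap.mem_ker, LinearMap.lsmul_apply]
      rw [smul_sub, smul_smul, ← pow_add, hzy, sub_self]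
  rcases hS.2 hsup with h | h
  · left
    have h1 : S ≤ g (n + 1) := (hn' (n + 1) (by lia)) ▸ h.ge
    simpa [g] using h1.trans (hg (show 1 ≤ n + 1 by lia))
  · right
    refine ⟨n, Submodule.mem_annihilator.2 fun y hy => ?_⟩
    exact (inf_eq_left.1 h) hy

lemma SupIrred.isPrime_radical_annihilator {S : Submodule R H} (hS : SupIrred S) :
    S.annihilator.radical.IsPrime := by
  have hsurj {r : R} (h : S ≤ S.map (LinearMap.lsmul R H r)) : r ∉ S.annihilator.radical := by
    rintro ⟨n, hn⟩
    refine hS.ne_bot (eq_bot_iff.2 fun y hy => ?_)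
    have key (n : ℕ) : ∀ y ∈ S, ∃ z ∈ S, r ^ n • z = y := by
      induction n with
      | zero => exact fun y hy => ⟨y, hy, by simp⟩
      | succ n ih =>
        intro y hy
        obtain ⟨z, hz, rfl⟩ := ih y hy
        obtain ⟨w, hw, rfl⟩ := h hz
        exact ⟨w, hw, by rw [pow_succ, mul_smul]; rfl⟩
    obtain ⟨z, hz, rfl⟩ := key n y hy
    exact (Submodule.mem_annihilator.1 hn) z hz
  refine ⟨fun h => ?_, fun {r s} hrs => ?_⟩
  · refine hsurj (r := 1) (fun y hy => ⟨y, hy, by simp⟩) (h ▸ Submodule.mem_top)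
  · rcases hS.smul_surjective_or_mem_radical r with hr | hr
    · rcases hS.smul_surjective_or_mem_radical s with hs | hs
      · refine absurd hrs (hsurj fun y hy => ?_)
        obtain ⟨z, hz, rfl⟩ := hr hy
        obtain ⟨w, hw, rfl⟩ := hs hz
        exact ⟨w, hw, mul_smul r s w⟩
      · exact Or.inr hs
    · exact Or.inl hr

open IsLocalRing in
/-- Multiplication by a general element of an Artinian module over a Noetherian local ring has
cokernel of finite length. -/
lemma exists_finite_primes_finite_quotSMulTop [IsLocalRing R] [IsNoetherianRing R] (H : Type*)
    [AddCommGroup H] [Module R H] [IsArtinian R H] :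
    ∃ T : Set (Ideal R), T.Finite ∧ (∀ p ∈ T, p.IsPrime) ∧ (∀ p ∈ T, ¬ maximalIdeal R ≤ p) ∧
      ∀ x : R, (∀ p ∈ T, x ∉ p) → Module.Finite R (QuotSMulTop x H) := by
  obtain ⟨s, hs, hirr⟩ := exists_supIrred_decomposition (⊤ : Submodule R H)
  let T : Set (Ideal R) :=
    {p | p ∈ (fun S : Submodule R H => S.annihilator.radical) '' s ∧ ¬ maximalIdeal R ≤ p}
  refine ⟨T, (s.finite_toSet.image _).subset fun p hp => hp.1, ?_, fun p hp => hp.2, ?_⟩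
  · rintro _ ⟨⟨S, hS, rfl⟩, -⟩
    exact (hirr hS).isPrime_radical_annihilator
  intro x hx
  have hbad (S : Submodule R H) : ∃ k : ℕ, maximalIdeal R ≤ S.annihilator.radical →
      maximalIdeal R ^ k ≤ S.annihilator := by
    by_cases h : maximalIdeal R ≤ S.annihilator.radical
    · obtain ⟨k, hk⟩ := Ideal.exists_pow_le_of_le_radical_of_fg h (IsNoetherian.noetherian _)
      exact ⟨k, fun _ => hk⟩
    · exact ⟨0, fun h' => absurd h' h⟩
  choose k hk using hbad
  have key : ∀ a ∈ maximalIdeal R ^ s.sup k, ∀ h : H,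
      h ∈ (LinearMap.range (LinearMap.lsmul R H x)).comap (LinearMap.lsmul R H a) := by
    intro a ha h
    suffices hle : s.sup id ≤
        (LinearMap.range (LinearMap.lsmul R H x)).comap (LinearMap.lsmul R H a) from
      hle (hs ▸ Submodule.mem_top)
    refine Finset.sup_le fun S hS y hy => ?_
    by_cases hm : maximalIdeal R ≤ S.annihilator.radical
    · have := hk S hm (Ideal.pow_le_pow_right (Finset.le_sup hS) ha)
      have h0 : a • y = 0 := Submodule.mem_annihilator.1 this y hy
      exact ⟨0, by simp [h0]⟩
    · have hxS := ((hirr hS).smul_surjective_or_mem_radical x).resolve_right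
        (hx _ ⟨⟨S, hS, rfl⟩, hm⟩)
      obtain ⟨z, -, hz⟩ := hxS hy
      exact ⟨a • z, by rw [map_smul, hz]; rfl⟩
  have : IsArtinian R (QuotSMulTop x H) := inferInstanceAs (IsArtinian R (H ⧸ _))
  have := (isNoetherian_iff_isArtinian_of_maximalIdeal_pow (M := QuotSMulTop x H) (s.sup k) (by
    intro a ha m
    obtain ⟨h, rfl⟩ := Submodule.mkQ_surjective _ m
    obtain ⟨z, hz⟩ := key a ha h
    rw [← map_smul, Submodule.mkQ_apply, Submodule.Quotient.mk_eq_zero]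
    simp only [LinearMap.lsmul_apply] at hz
    rw [← hz]
    exact Submodule.smul_mem_pointwise_smul _ _ _ Submodule.mem_top)).2 this
  infer_instance

end SecondaryDecomposition

section Torsion

variable {R : Type u} [CommRing R] [IsNoetherianRing R] (I : Ideal R)
  (M : Type u) [AddCommGroup M] [Module R M]

lemma powTorsion_quotient_powTorsion : powTorsion I (M ⧸ powTorsion I M) = ⊥ := by
  rw [eq_bot_iff]
  intro q hq
  obtain ⟨m, rfl⟩ := Submodule.mkQ_surjective _ q
  obtain ⟨t, ht⟩ := hq
  have hN : I ^ t • Submodule.span R {m} ≤ powTorsion I M := by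
    refine Submodule.smul_le.2 fun a ha n hn => ?_
    obtain ⟨r, rfl⟩ := Submodule.mem_span_singleton.1 hn
    have h := ht a ha
    rw [← map_smul, Submodule.mkQ_apply, Submodule.Quotient.mk_eq_zero] at h
    rw [smul_comm]
    exact Submodule.smul_mem _ _ h
  have : Module.Finite R (I ^ t • Submodule.span R {m} : Submodule R M) :=
    Module.Finite.iff_fg.2 (Submodule.FG.smul (IsNoetherian.noetherian _)
      (Submodule.fg_span_singleton m))
  obtain ⟨s, hs⟩ := exists_pow_smul_eq_zero_of_finite I (powTorsion_eq_top_of_injective I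
    (Submodule.inclusion_injective hN) (powTorsion_powTorsion I M))
  refine (Submodule.mem_bot R).2 ((Submodule.Quotient.mk_eq_zero _).2 ⟨s + t, ?_⟩)
  suffices h : I ^ (s + t) ≤ LinearMap.ker (LinearMap.toSpanSingleton R M m) from fun a ha => h ha
  rw [pow_add]
  refine Ideal.mul_le.2 fun a ha b hb => ?_
  rw [LinearMap.mem_ker, LinearMap.toSpanSingleton_apply, mul_smul]
  exact congrArg Subtype.val (hs a ha ⟨b • m, Submodule.smul_mem_smul hb
    (Submodule.mem_span_singleton_self m)⟩)

variable {M}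

/-- If `M` has no `I`-torsion, a larger ideal contains an `M`-regular element avoiding finitely many
given primes. -/
lemma exists_mem_isSMulRegular_of_powTorsion_eq_bot [Module.Finite R M]
    (hM : powTorsion I M = ⊥) {K : Ideal R} (hIK : I ≤ K) {T : Set (Ideal R)} (hT : T.Finite)
    (hp : ∀ p ∈ T, p.IsPrime) (hK : ∀ p ∈ T, ¬ K ≤ p) :
    ∃ x ∈ K, IsSMulRegular M x ∧ ∀ p ∈ T, x ∉ p := by
  obtain ⟨x, hxK, hx⟩ := exists_mem_notMem_of_finite_primes K
    (hT.union (associatedPrimes.finite R M)) (fun p h => h.elim (hp p) fun h => h.1) (by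
      rintro p (h | h) hKp
      · exact hK p h hKp
      · obtain ⟨hprime, m, rfl⟩ := isAssociatedPrime_iff.1 h
        have hm : m ∈ powTorsion I M := ⟨1, fun a ha => by
          rw [pow_one] at ha
          simpa using Submodule.mem_colon_singleton.1 (hKp (hIK ha))⟩
        rw [hM, Submodule.mem_bot] at hm
        subst hm
        exact hprime.ne_top (by simp))
  refine ⟨x, hxK, ?_, fun p h => hx p (Or.inl h)⟩
  by_contra hreg
  have h : x ∈ ⋃ p ∈ associatedPrimes R M, (p : Set R) := by
    rw [biUnion_associatedPrimes_eq_compl_regular]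
    exact hreg
  obtain ⟨p, hpA, hxp⟩ := Set.mem_iUnion₂.1 h
  exact hx p (Or.inr hpA) hxp

end Torsion

section Dimension

variable {R : Type u} [CommRing R] {M N : Type u} [AddCommGroup M] [Module R M] [AddCommGroup N]
  [Module R N]

lemma Module.supportDim_le_of_support_subset (h : Module.support R M ⊆ Module.support R N) :
    Module.supportDim R M ≤ Module.supportDim R N :=
  Order.krullDim_le_of_strictMono (Set.inclusion h) fun _ _ h => h

/-- Dividing by a submodule whose support has small dimension does not lower the dimension. -/
lemma Module.le_supportDim_quotient_of_supportDim_lt (N : Submodule R M) {n : ℕ}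
    (hn : n ≤ Module.supportDim R M) (hN : Module.supportDim R N < n) :
    n ≤ Module.supportDim R (M ⧸ N) := by
  obtain ⟨l, rfl⟩ := Order.le_krullDim_iff.1 hn
  have hl := Module.support_of_exact (LinearMap.exact_subtype_mkQ N) N.injective_subtype
    N.mkQ_surjective
  have key {Q : Type u} [AddCommGroup Q] [Module R Q]
      (hh : (l.head : PrimeSpectrum R) ∈ Module.support R Q) :
      (l.length : WithBot ℕ∞) ≤ Module.supportDim R Q := by
    refine Order.le_krullDim_iff.2 ⟨⟨l.length, fun i => ⟨(l i : PrimeSpectrum R),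
      Module.mem_support_mono (l.head_le i) hh⟩, fun i => l.step i⟩, rfl⟩
  have hh : (l.head : PrimeSpectrum R) ∈ Module.support R N ∪ Module.support R (M ⧸ N) :=
    hl ▸ l.head.2
  rcases hh with hh | hh
  · exact absurd (key hh) (not_le.2 hN)
  · exact key hh

lemma support_subset_zeroLocus_of_pow (I : Ideal R) (t : ℕ)
    (h : ∀ a ∈ I ^ t, ∀ m : M, a • m = 0) :
    Module.support R M ⊆ PrimeSpectrum.zeroLocus I := fun p hp => by
  have := Module.annihilator_le_of_mem_support hp
  have hI : I ^ t ≤ p.asIdeal := fun a ha =>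
    this (Module.mem_annihilator.2 fun m => h a ha m)
  exact p.2.le_of_pow_le hI

/-- The dimension of `M` is unchanged modulo `I`-torsion if it exceeds that of `M ⧸ I M`. -/
lemma supportDim_quotient_powTorsion [IsNoetherianRing R] [Module.Finite R M] (I : Ideal R)
    {n : ℕ} (hn : Module.supportDim R M = n)
    (h : Module.supportDim R (M ⧸ (I • (⊤ : Submodule R M))) < n) :
    Module.supportDim R (M ⧸ powTorsion I M) = n := by
  refine le_antisymm (hn ▸ Module.supportDim_le_of_surjective _ (Submodule.mkQ_surjective _))
    (Module.le_supportDim_quotient_of_supportDim_lt _ hn.ge (lt_of_le_of_lt ?_ h))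
  refine Module.supportDim_le_of_support_subset ?_
  obtain ⟨t, ht⟩ := exists_pow_smul_eq_zero_of_finite I (powTorsion_powTorsion I M)
  rw [Module.support_quotient]
  exact Set.subset_inter (Module.support_subset_of_injective _ (Submodule.injective_subtype _))
    (support_subset_zeroLocus_of_pow I t ht)

open IsLocalRing

variable [IsLocalRing R] [IsNoetherianRing R]

lemma exists_maximalIdeal_pow_le_of_krullDim_zeroLocus_le {J : Ideal R}
    (h : Order.krullDim (PrimeSpectrum.zeroLocus (J : Set R)) ≤ 0) :
    ∃ s : ℕ, maximalIdeal R ^ s ≤ J := by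
  refine Ideal.exists_pow_le_of_le_radical_of_fg ?_ (IsNoetherian.noetherian _)
  rw [← PrimeSpectrum.zeroLocus_subset_zeroLocus_iff]
  intro p hp
  have hpc : p ≤ closedPoint R := le_maximalIdeal p.2.ne_top
  have hc : closedPoint R ∈ PrimeSpectrum.zeroLocus (J : Set R) := fun a ha => hpc (hp ha)
  have hmax : IsMax (⟨p, hp⟩ : PrimeSpectrum.zeroLocus (J : Set R)) :=
    Order.krullDim_nonpos_iff_forall_isMax.1 h _
  exact hmax (b := ⟨closedPoint R, hc⟩) hpc

lemma exists_maximalIdeal_pow_le_annihilator [Module.Finite R M]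
    (h : Module.supportDim R M ≤ 0) : ∃ s : ℕ, maximalIdeal R ^ s ≤ Module.annihilator R M := by
  refine exists_maximalIdeal_pow_le_of_krullDim_zeroLocus_le ?_
  rwa [← Module.support_eq_zeroLocus]

lemma exists_maximalIdeal_pow_le_sup_annihilator [Module.Finite R M] {I : Ideal R}
    (h : Module.supportDim R (M ⧸ (I • (⊤ : Submodule R M))) ≤ 0) :
    ∃ s : ℕ, maximalIdeal R ^ s ≤ I ⊔ Module.annihilator R M := by
  refine exists_maximalIdeal_pow_le_of_krullDim_zeroLocus_le ?_
  rwa [PrimeSpectrum.zeroLocus_sup, ← Module.support_eq_zeroLocus, Set.inter_comm,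
    ← Module.support_quotient]

end Dimension

section QuotSMulTop

open scoped Pointwise

variable {R : Type u} [CommRing R] {M : Type u} [AddCommGroup M] [Module R M]

lemma exact_lsmul_mkQ (x : R) : Function.Exact (LinearMap.lsmul R M x)
    (x • (⊤ : Submodule R M)).mkQ := fun y => by
  rw [Submodule.mkQ_apply, Submodule.Quotient.mk_eq_zero, Submodule.mem_smul_pointwise_iff_exists]
  exact ⟨fun ⟨z, _, hz⟩ => ⟨z, hz⟩, fun ⟨z, hz⟩ => ⟨z, Submodule.mem_top, hz⟩⟩

end QuotSMulTop

section LocCohFiniteness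

open scoped Pointwise

variable {R : Type u} [CommRing R] (I : Ideal R)
  {M : Type u} [AddCommGroup M] [Module R M]

lemma subsingleton_locCoh_zero_of_powTorsion_eq_bot (hM : powTorsion I M = ⊥) :
    Subsingleton (LocCoh I M 0) := by
  refine subsingleton_of_forall_eq 0 fun x => locCohZeroEval_injective I M ?_
  rw [map_zero, ← Submodule.mem_bot R, ← hM, ← range_locCohZeroEval I]
  exact ⟨x, rfl⟩

/-- If `x ∈ I` is regular on `M`, Artinianness passes from the cohomology of `M ⧸ x M` to that of
`M` in the next degree. -/
lemma isArtinian_locCoh_succ_of_isSMulRegular {x : R} (hxI : x ∈ I) (hx : IsSMulRegular M x)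
    (i : ℕ) [IsArtinian R (LocCoh I (QuotSMulTop x M) i)] :
    IsArtinian R (LocCoh I M (i + 1)) := by
  have hx' : Function.Injective (LinearMap.lsmul R M x) := hx
  obtain ⟨δ, -, hδ⟩ := exists_locCoh_connecting I hx' (exact_lsmul_mkQ x)
    (x • (⊤ : Submodule R M)).mkQ_surjective i
  have hker : LinearMap.ker (LinearMap.lsmul R (LocCoh I M (i + 1)) x) = LinearMap.range δ := by
    rw [← LinearMap.exact_iff.1 hδ]
    ext y
    rw [LinearMap.mem_ker, LinearMap.mem_ker, locCohMap_lsmul, LinearMap.lsmul_apply]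
  have : IsArtinian R (LinearMap.ker (LinearMap.lsmul R (LocCoh I M (i + 1)) x)) := by
    rw [hker]
    infer_instance
  refine isArtinian_of_isArtinian_ker_lsmul x fun y => ?_
  obtain ⟨t, ht⟩ := (powTorsion_locCoh I (i + 1) (M := M)).ge (Submodule.mem_top (x := y))
  exact ⟨t, ht _ (Ideal.pow_mem_pow hxI t)⟩

variable [IsNoetherianRing R]

variable (M) in
lemma locCohMap_mkQ_powTorsion_bijective (i : ℕ) :
    Function.Bijective (locCohMap I (i + 1) (powTorsion I M).mkQ) := by
  have hf := (powTorsion I M).injective_subtype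
  have hfg := LinearMap.exact_subtype_mkQ (powTorsion I M)
  have hg := (powTorsion I M).mkQ_surjective
  have h1 := subsingleton_locCoh_succ_of_powTorsion_eq_top I (powTorsion_powTorsion I M)
  constructor
  · rw [← LinearMap.ker_eq_bot, LinearMap.exact_iff.1 (locCohMap_exact I hf hfg hg (i + 1))]
    exact LinearMap.range_eq_bot.2 (LinearMap.ext fun z => by
      rw [Subsingleton.elim z 0, map_zero, map_zero])
  · obtain ⟨δ, hδ, -⟩ := exists_locCoh_connecting I hf hfg hg (i + 1)
    exact fun z => (hδ z).1 (Subsingleton.elim _ _)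

/-- If `x` is regular on `M`, the cohomology of `M ⧸ x M` is finitely generated in a degree where
that of `M` is so modulo `x`, and in the next degree outright. -/
lemma finite_locCoh_quotSMulTop {x : R} (hx : IsSMulRegular M x) (i : ℕ)
    [Module.Finite R (QuotSMulTop x (LocCoh I M i))] [Module.Finite R (LocCoh I M (i + 1))] :
    Module.Finite R (LocCoh I (QuotSMulTop x M) i) := by
  have hx' : Function.Injective (LinearMap.lsmul R M x) := hx
  have hg := (x • (⊤ : Submodule R M)).mkQ_surjective
  obtain ⟨δ, hδ, -⟩ := exists_locCoh_connecting I hx' (exact_lsmul_mkQ x) hg i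
  let g := locCohMap I i (x • (⊤ : Submodule R M)).mkQ
  have hle : x • (⊤ : Submodule R (LocCoh I M i)) ≤ LinearMap.ker g := by
    intro y hy
    obtain ⟨z, -, rfl⟩ := (Submodule.mem_smul_pointwise_iff_exists _ _ _).1 hy
    rw [LinearMap.mem_ker, ← locCohMap_lsmul]
    exact (locCohMap_exact I hx' (exact_lsmul_mkQ x) hg i).apply_apply_eq_zero z
  refine ⟨Submodule.fg_of_fg_map_of_fg_inf_ker δ (IsNoetherian.noetherian _) ?_⟩
  rw [top_inf_eq, LinearMap.exact_iff.1 hδ]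
  have h := Submodule.range_liftQ _ g hle
  change (LinearMap.range g).FG
  rw [← h, ← Module.Finite.iff_fg]
  infer_instance

open IsLocalRing in
/-- Local cohomology of a finitely generated module supported modulo `I` at the closed point is
Artinian. -/
lemma isArtinian_locCoh [IsLocalRing R] [Module.Finite R M] {s : ℕ}
    (hs : maximalIdeal R ^ s ≤ I ⊔ Module.annihilator R M) (i : ℕ) :
    IsArtinian R (LocCoh I M i) := by
  induction i generalizing M with
  | zero =>
    obtain ⟨t, ht⟩ := exists_pow_smul_eq_zero_of_finite I (powTorsion_powTorsion I M)
    have hkill : ∀ a ∈ maximalIdeal R ^ (s * (t + 1)), ∀ m : powTorsion I M, a • m = 0 := by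
      intro a ha m
      have hle : maximalIdeal R ^ (s * (t + 1)) ≤ Module.annihilator R (powTorsion I M) := by
        have h1 : I ^ t ≤ Module.annihilator R (powTorsion I M) := fun b hb =>
          Module.mem_annihilator.2 (ht b hb)
        have h2 : Module.annihilator R M ≤ Module.annihilator R (powTorsion I M) :=
          LinearMap.annihilator_le_of_injective _ (powTorsion I M).injective_subtype
        calc maximalIdeal R ^ (s * (t + 1)) = (maximalIdeal R ^ s) ^ (t + 1) := pow_mul _ _ _
          _ ≤ (I ⊔ Module.annihilator R M) ^ (t + 1) := Ideal.pow_right_mono hs (t + 1)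
          _ ≤ I ^ t ⊔ Module.annihilator R M ^ 1 := Ideal.sup_pow_add_le_pow_sup_pow
          _ = I ^ t ⊔ Module.annihilator R M := by rw [pow_one]
          _ ≤ _ := sup_le h1 h2
      exact Module.mem_annihilator.1 (hle ha) m
    have hart := (isNoetherian_iff_isArtinian_of_maximalIdeal_pow _ hkill).1 inferInstance
    exact isArtinian_of_injective ((locCohZeroEval I M).codRestrict (powTorsion I M)
      fun x => range_locCohZeroEval I (M := M) ▸ LinearMap.mem_range_self _ x)
      fun x y h => locCohZeroEval_injective I M (congrArg Subtype.val h)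
  | succ i ih =>
    have e := LinearEquiv.ofBijective _ (locCohMap_mkQ_powTorsion_bijective I M i)
    suffices h : IsArtinian R (LocCoh I (M ⧸ powTorsion I M) (i + 1)) from
      isArtinian_of_linearEquiv e.symm
    have hs1 : maximalIdeal R ^ s ≤ I ⊔ Module.annihilator R (M ⧸ powTorsion I M) :=
      hs.trans (sup_le_sup_left (LinearMap.annihilator_le_of_surjective _
        (powTorsion I M).mkQ_surjective) _)
    obtain ⟨x, hxI, hx, -⟩ := exists_mem_isSMulRegular_of_powTorsion_eq_bot I
      (powTorsion_quotient_powTorsion I M) le_rfl Set.finite_empty (by simp) (by simp)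
    have := ih (M := QuotSMulTop x (M ⧸ powTorsion I M)) (hs1.trans (sup_le_sup_left
      (LinearMap.annihilator_le_of_surjective _ (Submodule.mkQ_surjective _)) _))
    exact isArtinian_locCoh_succ_of_isSMulRegular I hxI hx i

end LocCohFiniteness

section NonFiniteness

open scoped Pointwise

open IsLocalRing

variable {R : Type u} [CommRing R] {I : Ideal R} {M N : Type u} [AddCommGroup M] [Module R M]
  [AddCommGroup N] [Module R N]

variable (I) in
lemma supportDim_quotient_smul_top_mono [Module.Finite R M] [Module.Finite R N]
    (h : Module.support R N ⊆ Module.support R M) :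
    Module.supportDim R (N ⧸ (I • (⊤ : Submodule R N))) ≤
      Module.supportDim R (M ⧸ (I • (⊤ : Submodule R M))) := by
  refine Module.supportDim_le_of_support_subset ?_
  rw [Module.support_quotient, Module.support_quotient]
  exact Set.inter_subset_inter_left _ h

variable (I M) in
lemma finite_locCoh_quotient_powTorsion [IsNoetherianRing R] (i : ℕ)
    [Module.Finite R (LocCoh I M (i + 1))] :
    Module.Finite R (LocCoh I (M ⧸ powTorsion I M) (i + 1)) :=
  Module.Finite.of_surjective _ (locCohMap_mkQ_powTorsion_bijective I M i).2

variable [IsLocalRing R]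

lemma not_maximalIdeal_le_of_mem_minimalPrimes (h : 0 < Module.supportDim R M) {p : Ideal R}
    (hp : p ∈ (Module.annihilator R M).minimalPrimes) : ¬ maximalIdeal R ≤ p := by
  intro hmp
  refine not_le.2 h (Order.krullDim_nonpos_iff_forall_isMax.2 fun a b _ => ?_)
  have hb : b.1.asIdeal ≤ p := (le_maximalIdeal b.1.2.ne_top).trans hmp
  have ha : a.1.asIdeal ≤ p := (le_maximalIdeal a.1.2.ne_top).trans hmp
  exact hb.trans (hp.2 ⟨a.1.2, Module.annihilator_le_of_mem_support a.2⟩ ha)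

variable [IsNoetherianRing R] [Module.Finite R M]

lemma supportDim_quotSMulTop_eq {x : R} (hreg : IsSMulRegular M x) (hx : x ∈ maximalIdeal R)
    {n : ℕ} (hn : Module.supportDim R M = (n + 1 : ℕ)) :
    Module.supportDim R (QuotSMulTop x M) = n := by
  have h := Module.supportDim_quotSMulTop_succ_eq_supportDim hreg hx
  rw [hn, Nat.cast_add, Nat.cast_one] at h
  exact ENat.WithBot.add_one_cancel.1 h

lemma not_finite_locCoh_one (hI : I ≤ maximalIdeal R) (hM : powTorsion I M = ⊥)
    (hdim : Module.supportDim R M = (1 : ℕ)) : ¬ Module.Finite R (LocCoh I M 1) := by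
  intro hfin
  obtain ⟨x, hxI, hx, -⟩ := exists_mem_isSMulRegular_of_powTorsion_eq_bot I hM le_rfl
    Set.finite_empty (by simp) (by simp)
  obtain ⟨s, hs⟩ := exists_pow_smul_eq_zero_of_finite I (powTorsion_locCoh I 1 (M := M))
  have hreg : IsSMulRegular M (x ^ (s + 1)) := hx.pow _
  obtain ⟨r, hr⟩ := exists_maximalIdeal_pow_le_annihilator (supportDim_quotSMulTop_eq hreg
    (Ideal.pow_mem_of_mem _ (hI hxI) _ (by lia)) hdim).le
  have hinj : Function.Injective (LinearMap.lsmul R M (x ^ (s + 1))) := hreg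
  obtain ⟨δ, hgδ, -⟩ := exists_locCoh_connecting I hinj (exact_lsmul_mkQ (x ^ (s + 1)))
    (Submodule.mkQ_surjective _) 0
  have hzero := subsingleton_locCoh_zero_of_powTorsion_eq_bot I hM
  have key (m : M) : ∃ m', m = x • m' := by
    obtain ⟨z, hz⟩ : (x ^ (s + 1) • (⊤ : Submodule R M)).mkQ m ∈
        LinearMap.range (locCohZeroEval I (QuotSMulTop (x ^ (s + 1)) M)) := by
      rw [range_locCohZeroEval]
      exact ⟨r, fun a ha => Module.mem_annihilator.1 (hr (Ideal.pow_right_mono hI r ha)) _⟩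
    have hδz : δ (x ^ s • z) = 0 := by
      rw [map_smul]
      exact hs _ (Ideal.pow_mem_pow hxI s) _
    obtain ⟨w, hw⟩ := (hgδ _).1 hδz
    rw [Subsingleton.elim w 0, map_zero] at hw
    have h0 : (x ^ (s + 1) • (⊤ : Submodule R M)).mkQ (x ^ s • m) = 0 := by
      rw [map_smul, ← hz, ← map_smul, ← hw, map_zero]
    obtain ⟨m', hm'⟩ := (exact_lsmul_mkQ _ _).1 h0
    refine ⟨m', hx.pow s ?_⟩
    simp only [LinearMap.lsmul_apply] at hm'
    simp only [← hm', pow_succ, mul_smul]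
  have htop : (⊤ : Submodule R M) = ⊥ := by
    refine Submodule.eq_bot_of_le_smul_of_le_jacobson_bot (maximalIdeal R) ⊤
      Module.Finite.fg_top (fun m _ => ?_) (jacobson_eq_maximalIdeal ⊥ bot_ne_top).ge
    obtain ⟨m', rfl⟩ := key m
    exact Submodule.smul_mem_smul (hI hxI) Submodule.mem_top
  have : Subsingleton M := (Submodule.subsingleton_iff R).1 (subsingleton_of_bot_eq_top htop.symm)
  rw [Module.supportDim_eq_bot_of_subsingleton] at hdim
  exact WithBot.bot_ne_coe hdim

lemma not_forall_finite_locCoh_of_supportDim_le_zero (hI : I ≤ maximalIdeal R) (k : ℕ)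
    (hdim : Module.supportDim R M = (k + 1 : ℕ))
    (hquot : Module.supportDim R (M ⧸ (I • (⊤ : Submodule R M))) ≤ 0) :
    ¬ ∀ i ≥ k, Module.Finite R (LocCoh I M (i + 1)) := by
  intro hfin
  induction k generalizing M with
  | zero =>
    have := hfin 0 le_rfl
    exact not_finite_locCoh_one hI (powTorsion_quotient_powTorsion I M)
      (supportDim_quotient_powTorsion I hdim (lt_of_le_of_lt hquot (by simp)))
      (finite_locCoh_quotient_powTorsion I M 0)
  | succ k ih =>
    have hdim1 := supportDim_quotient_powTorsion I hdim
      (lt_of_le_of_lt hquot (Nat.cast_pos.2 (by lia)))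
    have hquot1 := (supportDim_quotient_smul_top_mono I (Module.support_subset_of_surjective _
      (powTorsion I M).mkQ_surjective)).trans hquot
    have hfin1 (i : ℕ) (hi : i ≥ k + 1) :
        Module.Finite R (LocCoh I (M ⧸ powTorsion I M) (i + 1)) := by
      have := hfin i hi
      exact finite_locCoh_quotient_powTorsion I M i
    obtain ⟨s, hs⟩ := exists_maximalIdeal_pow_le_sup_annihilator hquot1
    have := isArtinian_locCoh I hs (k + 1)
    obtain ⟨T, hT, hTp, hTm, hTfin⟩ := exists_finite_primes_finite_quotSMulTop (R := R)
      (LocCoh I (M ⧸ powTorsion I M) (k + 1))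
    obtain ⟨x, hxm, hx, hxT⟩ := exists_mem_isSMulRegular_of_powTorsion_eq_bot I
      (powTorsion_quotient_powTorsion I M) hI hT hTp hTm
    refine ih (M := QuotSMulTop x (M ⧸ powTorsion I M)) (supportDim_quotSMulTop_eq hx hxm hdim1)
      ((supportDim_quotient_smul_top_mono I (Module.support_subset_of_surjective _
        (Submodule.mkQ_surjective _))).trans hquot1) fun i hi => ?_
    have hnext := hfin1 (i + 1) (by lia)
    rcases hi.lt_or_eq with hi | rfl
    · have := hfin1 i (by lia)
      exact finite_locCoh_quotSMulTop I hx (i + 1)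
    · have := hTfin x hxT
      exact finite_locCoh_quotSMulTop I hx (k + 1)

/-- If `dim M` exceeds `dim (M ⧸ I M)` by more than `k`, the local cohomology modules of `M` cannot
all be finitely generated in degrees above `k`. -/
lemma not_forall_finite_locCoh (hI : I ≤ maximalIdeal R) (d k : ℕ)
    (hdim : Module.supportDim R M = (d + k + 1 : ℕ))
    (hquot : Module.supportDim R (M ⧸ (I • (⊤ : Submodule R M))) ≤ d) :
    ¬ ∀ i ≥ k, Module.Finite R (LocCoh I M (i + 1)) := by
  induction d generalizing M k with
  | zero => exact not_forall_finite_locCoh_of_supportDim_le_zero hI k (by simpa using hdim) hquot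
  | succ d ih =>
    intro hfin
    have hdim1 := supportDim_quotient_powTorsion I hdim
      (lt_of_le_of_lt hquot (Nat.cast_lt.2 (by lia)))
    have hquot1 := (supportDim_quotient_smul_top_mono I (Module.support_subset_of_surjective _
      (powTorsion I M).mkQ_surjective)).trans hquot
    have hfin1 (i : ℕ) (hi : i ≥ k) :
        Module.Finite R (LocCoh I (M ⧸ powTorsion I M) (i + 1)) := by
      have := hfin i hi
      exact finite_locCoh_quotient_powTorsion I M i
    by_cases hlow : Module.supportDim R
        ((M ⧸ powTorsion I M) ⧸ (I • (⊤ : Submodule R (M ⧸ powTorsion I M)))) ≤ d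
    · exact ih (k + 1) (by rw [hdim1]; congr 1; lia) hlow fun i hi => hfin1 i (by lia)
    · have hpos := lt_of_le_of_lt (Nat.cast_nonneg d) (not_le.1 hlow)
      obtain ⟨x, hxm, hx, hxT⟩ := exists_mem_isSMulRegular_of_powTorsion_eq_bot I
        (powTorsion_quotient_powTorsion I M) hI
        (Ideal.finite_minimalPrimes_of_isNoetherianRing R (Module.annihilator R
          ((M ⧸ powTorsion I M) ⧸ (I • (⊤ : Submodule R (M ⧸ powTorsion I M))))))
        (fun p hp => hp.1.1) fun p hp => not_maximalIdeal_le_of_mem_minimalPrimes hpos hp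
      refine ih (M := QuotSMulTop x (M ⧸ powTorsion I M)) k
        (supportDim_quotSMulTop_eq hx hxm (by rw [hdim1]; congr 1; lia)) ?_ fun i hi => ?_
      · have hdrop := (Module.supportDim_quotSMulTop_succ_le_of_notMem_minimalPrimes hxT).trans
          hquot1
        rw [Nat.cast_add, Nat.cast_one, ENat.WithBot.add_le_add_one_right_iff] at hdrop
        refine (Module.supportDim_le_of_support_subset ?_).trans hdrop
        rw [Module.support_quotient, Module.support_quotSMulTop, Module.support_quotSMulTop,
          Module.support_quotient, Set.inter_right_comm]
      · have := hfin1 i hi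
        have := hfin1 (i + 1) (by lia)
        exact finite_locCoh_quotSMulTop I hx (i + 1)

end NonFiniteness

/-- over a Noetherian local ring, for a finitely generated module `M` of
Krull dimension `n` and an ideal `I` with `dim (M/IM) = d`, we have `n - d ≤ cd(I,M)`. -/
theorem sub_le_cohomologicalDimension
    (R : Type u) [CommRing R] [IsNoetherianRing R] [IsLocalRing R]
    (M : ModuleCat.{u} R) [Module.Finite R M] (I : Ideal R) (n d : ℕ)
    (hn : Order.krullDim (Module.support R M) = (n : WithBot ℕ∞))
    (hd : Order.krullDim
      (Module.support R (M ⧸ (I • (⊤ : Submodule R M)))) = (d : WithBot ℕ∞)) :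
    ((n - d : ℕ) : ℕ∞) ≤ cohomologicalDimension I M := by
  rcases Nat.lt_or_ge d n with hdn | hdn
  swap
  · rw [Nat.sub_eq_zero_of_le hdn, Nat.cast_zero]
    exact zero_le
  obtain ⟨k, rfl⟩ := Nat.exists_eq_add_of_lt hdn
  by_contra! hlt
  have hI : I ≤ IsLocalRing.maximalIdeal R := by
    refine IsLocalRing.le_maximalIdeal fun hI => ?_
    subst hI
    have : Subsingleton (M ⧸ ((⊤ : Ideal R) • (⊤ : Submodule R M))) := by
      rw [Submodule.top_smul]
      infer_instance
    rw [Module.support_eq_empty, Order.krullDim_eq_bot] at hd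
    exact WithBot.bot_ne_coe hd
  refine not_forall_finite_locCoh (M := M) hI d k hn hd.le fun i hi => ?_
  have : Subsingleton (LocCoh I M (i + 1)) := by
    by_contra hne
    have hmem : ((i + 1 : ℕ) : ℕ∞) ≤ cohomologicalDimension I M :=
      le_sSup ⟨i + 1, rfl, not_subsingleton_iff_nontrivial.1 hne⟩
    exact absurd (hmem.trans_lt hlt) (not_lt.2 (Nat.cast_le.2 (by lia)))
  infer_instance
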